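/- arXiv:2506.04189 — 3 statements merged into one kernel-verified Lean document; each statement's English description precedes it below -/
import Mathlib

section
/- Let c > 0 be a constant and let R ~ G(n, c/n). Then with high probability cn/4 ≤ e(R) ≤ cn and Y(R) ≤ 2c²n, where e(R) is the number of edges of R and Y(R) is the number of non-isolated edges of R. Moreover, for every constant δ > 0 satisfying 2e/δ < e^{cδ/2}, with high probability R is ⌈δn⌉-joined. -/
open SimpleGraph Filter
open scoped Classical

/-- The probability that the binomial random graph `G(n,p)` satisfies property `P`. -/
noncomputable def erProb (n : ℕ) (p : ℝ) (P : SimpleGraph (Fin n) → Prop) : ℝ :=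
  ∑ G : SimpleGraph (Fin n),
    if P G then p ^ G.edgeSet.ncard * (1 - p) ^ (n.choose 2 - G.edgeSet.ncard) else 0

/-- `Y(G)`: the number of non-isolated edges of `G`, i.e. edges sharing an endpoint with
some other edge. -/
noncomputable def numNonIsolatedEdges {V : Type*} (G : SimpleGraph V) : ℕ :=
  {e ∈ G.edgeSet | ∃ f ∈ G.edgeSet, f ≠ e ∧ ∃ v : V, v ∈ e ∧ v ∈ f}.ncard

/-- A graph is `k`-joined if between any two disjoint vertex sets of size `k`
there is an edge. -/
def KJoined {V : Type*} (G : SimpleGraph V) (k : ℕ) : Prop :=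
  ∀ A B : Finset V, A.card = k → B.card = k → Disjoint A B →
    ∃ a ∈ A, ∃ b ∈ B, G.Adj a b

namespace ER

noncomputable def wt (n : ℕ) (p : ℝ) (G : SimpleGraph (Fin n)) : ℝ :=
  p ^ G.edgeSet.ncard * (1 - p) ^ (n.choose 2 - G.edgeSet.ncard)

/-- potential edges -/
noncomputable def D (n : ℕ) : Finset (Sym2 (Fin n)) :=
  Finset.univ.filter (fun e => ¬ e.IsDiag)

lemma card_D (n : ℕ) : (D n).card = n.choose 2 := by
  have := Sym2.card_subtype_not_diag (α := Fin n)
  rw [Fintype.card_subtype, Fintype.card_fin] at this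
  rw [← this, D]

lemma edge_mem_D {n : ℕ} {G : SimpleGraph (Fin n)} {e : Sym2 (Fin n)} (h : e ∈ G.edgeSet) :
    e ∈ D n := by
  simp only [D, Finset.mem_filter, Finset.mem_univ, true_and]
  exact G.not_isDiag_of_mem_edgeSet h

noncomputable def ind (q : Prop) : ℝ := if q then 1 else 0

lemma wt_sum (n : ℕ) (p : ℝ) (F : Finset (Sym2 (Fin n)) → ℝ) :
    ∑ G : SimpleGraph (Fin n), wt n p G * F (G.edgeSet.toFinset) =
      ∑ t ∈ (D n).powerset, (p ^ t.card * (1 - p) ^ (n.choose 2 - t.card)) * F t := by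
  refine Finset.sum_bij' (fun G _ => G.edgeSet.toFinset)
    (fun t _ => SimpleGraph.fromEdgeSet (t : Set (Sym2 (Fin n)))) ?_ ?_ ?_ ?_ ?_
  · intro G _
    rw [Finset.mem_powerset]
    intro e he
    exact edge_mem_D (by simpa using he)
  · intro t _
    simp
  · intro G _
    simp
  · intro t ht
    rw [Finset.mem_powerset] at ht
    ext e
    simp only [Set.mem_toFinset, SimpleGraph.edgeSet_fromEdgeSet, Set.mem_sdiff, Finset.mem_coe]
    constructor
    · exact fun h => h.1
    · intro h
      refine ⟨h, ?_⟩
      have := ht h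
      simp only [D, Finset.mem_filter, Finset.mem_univ, true_and] at this
      exact this
  · intro G _
    rw [wt, Set.ncard_eq_toFinset_card']

lemma prob_key (n : ℕ) (p : ℝ) (S T : Finset (Sym2 (Fin n))) (hS : S ⊆ D n) (hT : T ⊆ D n)
    (hd : Disjoint S T) :
    ∑ G : SimpleGraph (Fin n), wt n p G *
      ind ((∀ e ∈ S, e ∈ G.edgeSet) ∧ (∀ e ∈ T, e ∉ G.edgeSet)) =
      p ^ S.card * (1 - p) ^ T.card := by
  have h := wt_sum n p (fun t => ind ((∀ e ∈ S, e ∈ t) ∧ (∀ e ∈ T, e ∉ t)))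
  simp only [Set.mem_toFinset] at h
  rw [h]
  have key := Finset.prod_add (fun e => if e ∈ T then (0:ℝ) else p)
    (fun e => if e ∈ S then (0:ℝ) else 1 - p) (D n)
  have l : ∏ e ∈ D n, ((if e ∈ T then (0:ℝ) else p) + (if e ∈ S then (0:ℝ) else 1 - p))
      = p ^ S.card * (1 - p) ^ T.card := by
    have : ∀ e ∈ D n, ((if e ∈ T then (0:ℝ) else p) + (if e ∈ S then (0:ℝ) else 1 - p))
        = (if e ∈ S then p else 1) * (if e ∈ T then 1 - p else 1) := by
      intro e _
      by_cases h1 : e ∈ S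
      · have h2 : e ∉ T := Finset.disjoint_left.mp hd h1
        simp [h1, h2]
      · by_cases h2 : e ∈ T <;> simp [h1, h2]
    rw [Finset.prod_congr rfl this, Finset.prod_mul_distrib, Finset.prod_ite_mem,
      Finset.prod_ite_mem, Finset.prod_const, Finset.prod_const,
      Finset.inter_eq_right.mpr hS, Finset.inter_eq_right.mpr hT]
  rw [← l, key]
  refine Finset.sum_congr rfl fun t ht => ?_
  rw [Finset.mem_powerset] at ht
  by_cases hc : (∀ e ∈ S, e ∈ t) ∧ (∀ e ∈ T, e ∉ t)
  · rw [ind, if_pos hc, mul_one]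
    have a1 : ∏ e ∈ t, (if e ∈ T then (0:ℝ) else p) = p ^ t.card := by
      rw [← Finset.prod_const]
      refine Finset.prod_congr rfl fun e he => if_neg fun h => hc.2 e h he
    have a2 : ∏ e ∈ D n \ t, (if e ∈ S then (0:ℝ) else 1 - p) = (1 - p) ^ (n.choose 2 - t.card) := by
      rw [← card_D, ← Finset.card_sdiff_of_subset ht, ← Finset.prod_const]
      refine Finset.prod_congr rfl fun e he =>
        if_neg fun h => (Finset.mem_sdiff.mp he).2 (hc.1 e h)
    rw [a1, a2]
  · rw [ind, if_neg hc, mul_zero]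
    symm
    rw [not_and_or] at hc
    rcases hc with hc | hc
    · push Not at hc
      obtain ⟨e, he, h2⟩ := hc
      rw [Finset.prod_eq_zero (i := e) (s := D n \ t), mul_zero]
      · exact Finset.mem_sdiff.mpr ⟨hS he, h2⟩
      · simp [he]
    · push Not at hc
      obtain ⟨e, he, h2⟩ := hc
      rw [Finset.prod_eq_zero (i := e) (s := t) h2, zero_mul]
      simp [he]

lemma prob_sub (n : ℕ) (p : ℝ) (S : Finset (Sym2 (Fin n))) (hS : S ⊆ D n) :
    ∑ G : SimpleGraph (Fin n), wt n p G * ind (∀ e ∈ S, e ∈ G.edgeSet) = p ^ S.card := by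
  have := prob_key n p S ∅ hS (by simp) (by simp)
  simpa using this

lemma wt_total (n : ℕ) (p : ℝ) : ∑ G : SimpleGraph (Fin n), wt n p G = 1 := by
  have := prob_sub n p ∅ (by simp)
  simpa [ind] using this

lemma wt_nonneg (n : ℕ) (p : ℝ) (h0 : 0 ≤ p) (h1 : p ≤ 1) (G : SimpleGraph (Fin n)) :
    0 ≤ wt n p G := by
  have : 0 ≤ 1 - p := by linarith
  unfold wt; positivity

lemma erProb_eq (n : ℕ) (p : ℝ) (P : SimpleGraph (Fin n) → Prop) :
    erProb n p P = ∑ G : SimpleGraph (Fin n), wt n p G * ind (P G) := by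
  unfold erProb
  refine Finset.sum_congr rfl fun G _ => ?_
  unfold wt ind
  split_ifs <;> simp

lemma erProb_le_one (n : ℕ) (p : ℝ) (h0 : 0 ≤ p) (h1 : p ≤ 1) (P : SimpleGraph (Fin n) → Prop) :
    erProb n p P ≤ 1 := by
  rw [erProb_eq, ← wt_total n p]
  refine Finset.sum_le_sum fun G _ => ?_
  have := wt_nonneg n p h0 h1 G
  unfold ind
  split_ifs <;> simp [this]

/-- lower bound by dominating the indicator of the complement -/
lemma erProb_ge (n : ℕ) (p : ℝ) (h0 : 0 ≤ p) (h1 : p ≤ 1) (P : SimpleGraph (Fin n) → Prop)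
    (f : SimpleGraph (Fin n) → ℝ) (hf0 : ∀ G, 0 ≤ f G) (hf : ∀ G, ¬ P G → 1 ≤ f G) :
    1 - ∑ G : SimpleGraph (Fin n), wt n p G * f G ≤ erProb n p P := by
  rw [erProb_eq, ← wt_total n p, ← Finset.sum_sub_distrib]
  refine Finset.sum_le_sum fun G _ => ?_
  have h := wt_nonneg n p h0 h1 G
  unfold ind
  split_ifs with hP
  · nlinarith [hf0 G, mul_nonneg h (hf0 G)]
  · nlinarith [hf G hP, mul_nonneg h (sub_nonneg.mpr (hf G hP))]

/-- number of members of the family contained in G -/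
noncomputable def cnt {n : ℕ} {ι : Type*} (I : Finset ι) (S : ι → Finset (Sym2 (Fin n)))
    (G : SimpleGraph (Fin n)) : ℝ :=
  ∑ i ∈ I, ind (∀ e ∈ S i, e ∈ G.edgeSet)

lemma ex_cnt {n : ℕ} (p : ℝ) {ι : Type*} (I : Finset ι) (S : ι → Finset (Sym2 (Fin n)))
    (hS : ∀ i ∈ I, S i ⊆ D n) :
    ∑ G : SimpleGraph (Fin n), wt n p G * cnt I S G = ∑ i ∈ I, p ^ (S i).card := by
  unfold cnt
  simp_rw [Finset.mul_sum]
  rw [Finset.sum_comm]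
  exact Finset.sum_congr rfl fun i hi => prob_sub n p (S i) (hS i hi)

lemma ex_cnt_sq {n : ℕ} (p : ℝ) {ι : Type*} (I : Finset ι) (S : ι → Finset (Sym2 (Fin n)))
    (hS : ∀ i ∈ I, S i ⊆ D n) :
    ∑ G : SimpleGraph (Fin n), wt n p G * (cnt I S G) ^ 2 =
      ∑ i ∈ I, ∑ j ∈ I, p ^ (S i ∪ S j).card := by
  have h1 : ∀ G : SimpleGraph (Fin n), wt n p G * (cnt I S G) ^ 2 =
      ∑ i ∈ I, ∑ j ∈ I, wt n p G * ind (∀ e ∈ S i ∪ S j, e ∈ G.edgeSet) := by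
    intro G
    rw [cnt, sq, Finset.sum_mul_sum, Finset.mul_sum]
    refine Finset.sum_congr rfl fun i _ => ?_
    rw [Finset.mul_sum]
    refine Finset.sum_congr rfl fun j _ => ?_
    congr 1
    simp only [Finset.mem_union, or_imp, forall_and]
    unfold ind
    split_ifs <;> simp_all
  simp_rw [h1]
  rw [Finset.sum_comm]
  refine Finset.sum_congr rfl fun i hi => ?_
  rw [Finset.sum_comm]
  refine Finset.sum_congr rfl fun j hj => ?_
  exact prob_sub n p _ (Finset.union_subset (hS i hi) (hS j hj))

lemma var_cnt {n : ℕ} (p : ℝ) (h0 : 0 ≤ p) {ι : Type*} (I : Finset ι)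
    (S : ι → Finset (Sym2 (Fin n))) (hS : ∀ i ∈ I, S i ⊆ D n) :
    ∑ G : SimpleGraph (Fin n), wt n p G * (cnt I S G - ∑ i ∈ I, p ^ (S i).card) ^ 2 ≤
      ∑ i ∈ I, ∑ j ∈ I with ¬ Disjoint (S i) (S j), p ^ (S i ∪ S j).card := by
  set μ := ∑ i ∈ I, p ^ (S i).card with hμ
  have e1 : ∑ G : SimpleGraph (Fin n), wt n p G * (cnt I S G - μ) ^ 2 =
      ∑ i ∈ I, ∑ j ∈ I, p ^ (S i ∪ S j).card - μ ^ 2 := by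
    have : ∀ G : SimpleGraph (Fin n), wt n p G * (cnt I S G - μ) ^ 2 =
      wt n p G * (cnt I S G) ^ 2 - (2 * μ) * (wt n p G * cnt I S G) + μ ^ 2 * wt n p G := by
      intro G; ring
    simp_rw [this]
    rw [Finset.sum_add_distrib, Finset.sum_sub_distrib, ← Finset.mul_sum, ← Finset.mul_sum,
      ex_cnt_sq p I S hS, ex_cnt p I S hS, wt_total]
    ring
  have e2 : μ ^ 2 = ∑ i ∈ I, ∑ j ∈ I, p ^ ((S i).card + (S j).card) := by
    rw [hμ, sq, Finset.sum_mul_sum]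
    simp_rw [pow_add]
  rw [e1, e2, ← Finset.sum_sub_distrib]
  refine Finset.sum_le_sum fun i _ => ?_
  rw [← Finset.sum_sub_distrib, Finset.sum_filter]
  refine Finset.sum_le_sum fun j _ => ?_
  by_cases h : Disjoint (S i) (S j)
  swap
  · rw [if_pos h]
    have : 0 ≤ p ^ ((S i).card + (S j).card) := by positivity
    linarith
  · rw [if_neg (not_not.mpr h)]
    rw [Finset.card_union_of_disjoint h, sub_self]

lemma cnt_edges {n : ℕ} (G : SimpleGraph (Fin n)) :
    cnt (D n) (fun e => {e}) G = (G.edgeSet.ncard : ℝ) := by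
  unfold cnt ind
  simp only [Finset.mem_singleton, forall_eq]
  rw [Finset.sum_boole, Set.ncard_eq_toFinset_card']
  congr 2
  ext e
  simp only [Finset.mem_filter, Set.mem_toFinset]
  exact ⟨fun h => h.2, fun h => ⟨edge_mem_D h, h⟩⟩

lemma var_edges (n : ℕ) (p : ℝ) (h0 : 0 ≤ p) :
    ∑ G : SimpleGraph (Fin n), wt n p G * ((G.edgeSet.ncard : ℝ) - (n.choose 2 : ℕ) * p) ^ 2 ≤
      (n.choose 2 : ℕ) * p := by
  have h := var_cnt (n := n) p h0 (D n) (fun e => {e}) (by simp)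
  simp only [cnt_edges, Finset.card_singleton, pow_one, Finset.sum_const, card_D,
    nsmul_eq_mul] at h
  refine h.trans (le_of_eq ?_)
  rw [← card_D, ← nsmul_eq_mul, ← Finset.sum_const]
  refine Finset.sum_congr rfl fun e he => ?_
  have : (D n).filter (fun j => ¬ Disjoint ({e} : Finset (Sym2 (Fin n))) {j}) = {e} := by
    ext j
    simp only [Finset.mem_filter, Finset.disjoint_singleton, not_not, Finset.mem_singleton]
    constructor
    · exact fun h => h.2.symm
    · rintro rfl; exact ⟨he, rfl⟩
  rw [this]; simp

/-- ordered pairs of distinct intersecting potential edges -/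
noncomputable def PP (n : ℕ) : Finset (Sym2 (Fin n) × Sym2 (Fin n)) :=
  Finset.univ.filter (fun q => ¬ q.1.IsDiag ∧ ¬ q.2.IsDiag ∧ q.2 ≠ q.1 ∧ ∃ v, v ∈ q.1 ∧ v ∈ q.2)

lemma mem_PP {n : ℕ} {q : Sym2 (Fin n) × Sym2 (Fin n)} :
    q ∈ PP n ↔ ¬ q.1.IsDiag ∧ ¬ q.2.IsDiag ∧ q.2 ≠ q.1 ∧ ∃ v, v ∈ q.1 ∧ v ∈ q.2 := by
  simp [PP]

lemma card_PP (n : ℕ) : (PP n).card ≤ n ^ 3 := by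
  have : PP n ⊆ Finset.univ.image (fun t : Fin n × Fin n × Fin n =>
      ((s(t.2.1, t.1), s(t.2.1, t.2.2)) : Sym2 (Fin n) × Sym2 (Fin n))) := by
    rintro ⟨e, f⟩ hq
    obtain ⟨_, _, _, v, h1, h2⟩ := mem_PP.mp hq
    obtain ⟨x, hx⟩ := h1
    obtain ⟨y, hy⟩ := h2
    rw [Finset.mem_image]
    refine ⟨(x, v, y), Finset.mem_univ _, ?_⟩
    simp only at hx hy ⊢
    rw [hx, hy]
  refine (Finset.card_le_card this).trans (Finset.card_image_le.trans (le_of_eq ?_))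
  simp [Fintype.card_prod]; ring

lemma card_fib1 {n : ℕ} (e : Sym2 (Fin n)) : ((PP n).filter (fun q => q.1 = e)).card ≤ 2 * n := by
  induction e using Sym2.ind with
  | _ a b =>
  have : (PP n).filter (fun q => q.1 = s(a, b)) ⊆
      Finset.univ.image (fun t : Bool × Fin n =>
      ((s(a, b), s(if t.1 then a else b, t.2)) : Sym2 (Fin n) × Sym2 (Fin n))) := by
    rintro ⟨e, f⟩ hq
    obtain ⟨hq, he⟩ := Finset.mem_filter.mp hq
    obtain ⟨_, _, _, v, h1, h2⟩ := mem_PP.mp hq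
    obtain ⟨y, hy⟩ := h2
    simp only at he h1 hy
    subst he
    rw [Finset.mem_image]
    rcases Sym2.mem_iff.mp h1 with h | h
    · exact ⟨(true, y), Finset.mem_univ _, by simp [hy, h]⟩
    · exact ⟨(false, y), Finset.mem_univ _, by simp [hy, h]⟩
  refine (Finset.card_le_card this).trans (Finset.card_image_le.trans (le_of_eq ?_))
  simp [Fintype.card_prod]

lemma swap_PP {n : ℕ} {q : Sym2 (Fin n) × Sym2 (Fin n)} (h : q ∈ PP n) : q.swap ∈ PP n := by
  obtain ⟨h1, h2, h3, v, h4, h5⟩ := mem_PP.mp h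
  exact mem_PP.mpr ⟨h2, h1, h3.symm, v, h5, h4⟩

lemma card_fib2 {n : ℕ} (e : Sym2 (Fin n)) : ((PP n).filter (fun q => q.2 = e)).card ≤ 2 * n := by
  refine le_trans ?_ (card_fib1 e)
  refine Finset.card_le_card_of_injOn Prod.swap ?_ Prod.swap_injective.injOn
  intro q hq
  obtain ⟨hq, he⟩ := Finset.mem_filter.mp hq
  exact Finset.mem_filter.mpr ⟨swap_PP hq, he⟩

noncomputable def pairSet {n : ℕ} (q : Sym2 (Fin n) × Sym2 (Fin n)) : Finset (Sym2 (Fin n)) :=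
  {q.1, q.2}

lemma pairSet_sub {n : ℕ} : ∀ q ∈ PP n, pairSet q ⊆ D n := by
  intro q hq e he
  obtain ⟨h1, h2, h3, v, h4, h5⟩ := mem_PP.mp hq
  simp only [pairSet, Finset.mem_insert, Finset.mem_singleton] at he
  simp only [D, Finset.mem_filter, Finset.mem_univ, true_and]
  rcases he with rfl | rfl <;> assumption

lemma pairSet_card {n : ℕ} (q : Sym2 (Fin n) × Sym2 (Fin n)) (hq : q ∈ PP n) :
    (pairSet q).card = 2 := by
  obtain ⟨h1, h2, h3, v, h4, h5⟩ := mem_PP.mp hq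
  exact Finset.card_pair h3.symm

lemma card_touch {n : ℕ} (q : Sym2 (Fin n) × Sym2 (Fin n)) :
    ((PP n).filter (fun r => ¬ Disjoint (pairSet q) (pairSet r))).card ≤ 8 * n := by
  have : (PP n).filter (fun r => ¬ Disjoint (pairSet q) (pairSet r)) ⊆
      ((PP n).filter (fun r => r.1 = q.1) ∪ (PP n).filter (fun r => r.1 = q.2)) ∪
      ((PP n).filter (fun r => r.2 = q.1) ∪ (PP n).filter (fun r => r.2 = q.2)) := by
    intro r hr
    obtain ⟨hr, h⟩ := Finset.mem_filter.mp hr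
    rw [Finset.not_disjoint_iff] at h
    obtain ⟨e, he1, he2⟩ := h
    simp only [pairSet, Finset.mem_insert, Finset.mem_singleton] at he1 he2
    simp only [Finset.mem_union, Finset.mem_filter, hr, true_and]
    rcases he1 with rfl | rfl <;> rcases he2 with h | h <;> simp [h]
  refine (Finset.card_le_card this).trans ((Finset.card_union_le _ _).trans ?_)
  have a := Finset.card_union_le ((PP n).filter (fun r => r.1 = q.1))
    ((PP n).filter (fun r => r.1 = q.2))
  have b := Finset.card_union_le ((PP n).filter (fun r => r.2 = q.1))
    ((PP n).filter (fun r => r.2 = q.2))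
  have := card_fib1 q.1
  have := card_fib1 q.2
  have := card_fib2 q.1
  have := card_fib2 q.2
  omega

lemma pow_union {n : ℕ} (p : ℝ) (h0 : 0 ≤ p) (h1 : p ≤ 1) (q r : Sym2 (Fin n) × Sym2 (Fin n))
    (hq : q ∈ PP n) (hr : r ∈ PP n) :
    p ^ (pairSet q ∪ pairSet r).card ≤
      (if r ∈ ({q, q.swap} : Finset _) then p ^ 2 else 0) + p ^ 3 := by
  have hp3 : 0 ≤ p ^ 3 := by positivity
  have hp2 : 0 ≤ p ^ 2 := by positivity
  have c2 := pairSet_card q hq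
  have c2' := pairSet_card r hr
  split_ifs with h
  · have : 2 ≤ (pairSet q ∪ pairSet r).card :=
      c2 ▸ Finset.card_le_card Finset.subset_union_left
    have := pow_le_pow_of_le_one h0 h1 this
    linarith
  · have : 3 ≤ (pairSet q ∪ pairSet r).card := by
      by_contra hlt
      have e1 : pairSet q = pairSet q ∪ pairSet r :=
        Finset.eq_of_subset_of_card_le Finset.subset_union_left (by omega)
      have e2 : pairSet r = pairSet q ∪ pairSet r :=
        Finset.eq_of_subset_of_card_le Finset.subset_union_right (by omega)
      have e3 : pairSet r = pairSet q := e2.trans e1.symm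
      apply h
      obtain ⟨_, _, hne, _⟩ := mem_PP.mp hr
      have m1 : r.1 ∈ pairSet q := e3 ▸ (by simp [pairSet])
      have m2 : r.2 ∈ pairSet q := e3 ▸ (by simp [pairSet])
      simp only [pairSet, Finset.mem_insert, Finset.mem_singleton] at m1 m2
      simp only [Finset.mem_insert, Finset.mem_singleton, Prod.ext_iff, Prod.fst_swap,
        Prod.snd_swap]
      rcases m1 with m1 | m1 <;> rcases m2 with m2 | m2
      · exact absurd (m2.trans m1.symm) hne
      · exact Or.inl ⟨m1, m2⟩
      · exact Or.inr ⟨m1, m2⟩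
      · exact absurd (m2.trans m1.symm) hne
    have := pow_le_pow_of_le_one h0 h1 this
    linarith

lemma var_pairs (n : ℕ) (p : ℝ) (h0 : 0 ≤ p) (h1 : p ≤ 1) :
    ∑ G : SimpleGraph (Fin n), wt n p G * (cnt (PP n) pairSet G - (PP n).card * p ^ 2) ^ 2 ≤
      n ^ 3 * (2 * p ^ 2 + 8 * n * p ^ 3) := by
  have h := var_cnt (n := n) p h0 (PP n) pairSet pairSet_sub
  have hμ : ∑ i ∈ PP n, p ^ (pairSet i).card = (PP n).card * p ^ 2 := by
    rw [← nsmul_eq_mul, ← Finset.sum_const]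
    exact Finset.sum_congr rfl fun q hq => by rw [pairSet_card q hq]
  rw [hμ] at h
  refine h.trans ?_
  have hin : ∀ q ∈ PP n, ∑ r ∈ PP n with ¬ Disjoint (pairSet q) (pairSet r),
      p ^ (pairSet q ∪ pairSet r).card ≤ 2 * p ^ 2 + 8 * n * p ^ 3 := by
    intro q hq
    have s1 : ∑ r ∈ PP n with ¬ Disjoint (pairSet q) (pairSet r),
      p ^ (pairSet q ∪ pairSet r).card ≤
      ∑ r ∈ PP n with ¬ Disjoint (pairSet q) (pairSet r),
        ((if r ∈ ({q, q.swap} : Finset _) then p ^ 2 else 0) + p ^ 3) :=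
      Finset.sum_le_sum fun r hr => pow_union p h0 h1 q r hq (Finset.mem_filter.mp hr).1
    refine s1.trans ?_
    rw [Finset.sum_add_distrib, Finset.sum_const, nsmul_eq_mul]
    refine add_le_add ?_ ?_
    · rw [Finset.sum_ite_mem, Finset.sum_const, nsmul_eq_mul]
      refine mul_le_mul_of_nonneg_right ?_ (by positivity)
      have := (Finset.card_le_card (Finset.inter_subset_right (s₁ :=
        (PP n).filter (fun r => ¬ Disjoint (pairSet q) (pairSet r)))
        (s₂ := ({q, q.swap} : Finset _)))).trans Finset.card_le_two
      exact_mod_cast this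
    · refine mul_le_mul_of_nonneg_right ?_ (by positivity)
      exact_mod_cast card_touch q
  refine (Finset.sum_le_sum hin).trans ?_
  rw [Finset.sum_const, nsmul_eq_mul]
  refine mul_le_mul_of_nonneg_right ?_ (by positivity)
  exact_mod_cast card_PP n

lemma Y_le {n : ℕ} (G : SimpleGraph (Fin n)) :
    (numNonIsolatedEdges G : ℝ) ≤ cnt (PP n) pairSet G := by
  unfold cnt ind
  have hs : (∑ q ∈ PP n, if ∀ e ∈ pairSet q, e ∈ G.edgeSet then (1:ℝ) else 0) =
      (((PP n).filter (fun q => ∀ e ∈ pairSet q, e ∈ G.edgeSet)).card : ℝ) := by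
    rw [Finset.card_filter]
    push_cast
    refine Finset.sum_congr rfl fun q _ => ?_
    split_ifs <;> rfl
  refine le_of_le_of_eq ?_ (hs.symm.trans (Finset.sum_congr rfl fun q _ => by congr))
  have : {e ∈ G.edgeSet | ∃ f ∈ G.edgeSet, f ≠ e ∧ ∃ v : Fin n, v ∈ e ∧ v ∈ f}.toFinset ⊆
      ((PP n).filter (fun q => ∀ e ∈ pairSet q, e ∈ G.edgeSet)).image Prod.fst := by
    intro e he
    rw [Set.mem_toFinset] at he
    obtain ⟨he, f, hf, hne, v, hv⟩ := he
    rw [Finset.mem_image]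
    refine ⟨(e, f), Finset.mem_filter.mpr ⟨mem_PP.mpr ⟨G.not_isDiag_of_mem_edgeSet he,
      G.not_isDiag_of_mem_edgeSet hf, hne, v, hv⟩, ?_⟩, rfl⟩
    intro x hx
    simp only [pairSet, Finset.mem_insert, Finset.mem_singleton] at hx
    rcases hx with rfl | rfl <;> assumption
  have := (Finset.card_le_card this).trans Finset.card_image_le
  rw [numNonIsolatedEdges, Set.ncard_eq_toFinset_card']
  exact_mod_cast this

lemma part1_bound (c : ℝ) (hc : 0 < c) (n : ℕ) (hn4 : 4 ≤ n) (hcn : c ≤ n) :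
    1 - (40 / c + 2 / c ^ 2) / n ≤ erProb n (c / n) (fun R =>
        c * n / 4 ≤ (R.edgeSet.ncard : ℝ) ∧ (R.edgeSet.ncard : ℝ) ≤ c * n ∧
          ((numNonIsolatedEdges R : ℝ) ≤ 2 * c ^ 2 * n)) := by
  have hn : (4:ℝ) ≤ n := by exact_mod_cast hn4
  have hn0 : (0:ℝ) < n := by linarith
  have h0 : 0 ≤ c / n := by positivity
  have h1 : c / n ≤ 1 := by rw [div_le_one hn0]; exact hcn
  set p := c / n with hp
  have hpn : p * n = c := by rw [hp]; field_simp
  have hμ1 : ((n.choose 2 : ℕ) : ℝ) * p = c * (n - 1) / 2 := by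
    rw [Nat.cast_choose_two, ← hpn]; ring
  have hμ2 : ((PP n).card : ℝ) * p ^ 2 ≤ c ^ 2 * n := by
    have : ((PP n).card : ℝ) ≤ n ^ 3 := by exact_mod_cast card_PP n
    calc ((PP n).card : ℝ) * p ^ 2 ≤ n ^ 3 * p ^ 2 :=
          mul_le_mul_of_nonneg_right this (by positivity)
      _ = c ^ 2 * n := by rw [← hpn]; ring
  have v1 := var_edges n p h0
  have v2 := var_pairs n p h0 h1
  rw [hμ1] at v1
  set μ2 := ((PP n).card : ℝ) * p ^ 2
  have key := erProb_ge n p h0 h1 (fun R =>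
        c * n / 4 ≤ (R.edgeSet.ncard : ℝ) ∧ (R.edgeSet.ncard : ℝ) ≤ c * n ∧
          ((numNonIsolatedEdges R : ℝ) ≤ 2 * c ^ 2 * n))
      (fun R => ((R.edgeSet.ncard : ℝ) - c * (n - 1) / 2) ^ 2 / (c * n / 8) ^ 2 +
        (cnt (PP n) pairSet R - μ2) ^ 2 / (c ^ 2 * n) ^ 2)
      (fun R => by positivity) ?_
  · refine le_trans ?_ key
    have : ∑ G : SimpleGraph (Fin n), wt n p G *
        (((G.edgeSet.ncard : ℝ) - c * (n - 1) / 2) ^ 2 / (c * n / 8) ^ 2 +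
        (cnt (PP n) pairSet G - μ2) ^ 2 / (c ^ 2 * n) ^ 2) =
      (∑ G : SimpleGraph (Fin n), wt n p G * ((G.edgeSet.ncard : ℝ) - c * (n - 1) / 2) ^ 2)
         / (c * n / 8) ^ 2 +
      (∑ G : SimpleGraph (Fin n), wt n p G * (cnt (PP n) pairSet G - μ2) ^ 2)
         / (c ^ 2 * n) ^ 2 := by
      rw [Finset.sum_div, Finset.sum_div, ← Finset.sum_add_distrib]
      refine Finset.sum_congr rfl fun G _ => by ring
    rw [this]
    have b1 : (∑ G : SimpleGraph (Fin n), wt n p G *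
        ((G.edgeSet.ncard : ℝ) - c * (n - 1) / 2) ^ 2) / (c * n / 8) ^ 2 ≤ 32 / c / n := by
      rw [div_le_iff₀ (by positivity)]
      refine v1.trans ?_
      have : 32 / c / n * (c * n / 8) ^ 2 = c * n / 2 := by field_simp; norm_num
      rw [this]; nlinarith
    have b2 : (∑ G : SimpleGraph (Fin n), wt n p G * (cnt (PP n) pairSet G - μ2) ^ 2)
         / (c ^ 2 * n) ^ 2 ≤ (8 / c + 2 / c ^ 2) / n := by
      rw [div_le_iff₀ (by positivity)]
      refine v2.trans (le_of_eq ?_)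
      rw [hp]; field_simp; ring
    have e : (40 / c + 2 / c ^ 2) / n = 32 / c / n + (8 / c + 2 / c ^ 2) / n := by ring
    linarith
  · intro R hR
    have hnn1 : 0 ≤ ((R.edgeSet.ncard : ℝ) - c * (n - 1) / 2) ^ 2 / (c * n / 8) ^ 2 := by
      positivity
    have hnn2 : 0 ≤ (cnt (PP n) pairSet R - μ2) ^ 2 / (c ^ 2 * n) ^ 2 := by positivity
    have hcn4 : c * 4 ≤ c * n := mul_le_mul_of_nonneg_left hn hc.le
    by_cases hA : c * n / 4 ≤ (R.edgeSet.ncard : ℝ)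
    · by_cases hB : (R.edgeSet.ncard : ℝ) ≤ c * n
      · have hY : 2 * c ^ 2 * n < (numNonIsolatedEdges R : ℝ) := by
          by_contra h; exact hR ⟨hA, hB, not_lt.mp h⟩
        have := Y_le R
        have : 1 ≤ (cnt (PP n) pairSet R - μ2) ^ 2 / (c ^ 2 * n) ^ 2 := by
          rw [le_div_iff₀ (by positivity), one_mul]
          exact pow_le_pow_left₀ (by positivity) (by linarith) 2
        linarith
      · have : 1 ≤ ((R.edgeSet.ncard : ℝ) - c * (n - 1) / 2) ^ 2 / (c * n / 8) ^ 2 := by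
          rw [le_div_iff₀ (by positivity), one_mul]
          exact pow_le_pow_left₀ (by positivity) (by push Not at hB; linarith) 2
        linarith
    · have : 1 ≤ ((R.edgeSet.ncard : ℝ) - c * (n - 1) / 2) ^ 2 / (c * n / 8) ^ 2 := by
        rw [le_div_iff₀ (by positivity), one_mul, ← neg_sq ((R.edgeSet.ncard : ℝ) - _)]
        exact pow_le_pow_left₀ (by positivity) (by push Not at hA; linarith) 2
      linarith

/-- potential edges between A and B -/
noncomputable def cross {n : ℕ} (q : Finset (Fin n) × Finset (Fin n)) : Finset (Sym2 (Fin n)) :=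
  (q.1 ×ˢ q.2).image (fun x => s(x.1, x.2))

lemma cross_sub {n : ℕ} (q : Finset (Fin n) × Finset (Fin n)) (h : Disjoint q.1 q.2) :
    cross q ⊆ D n := by
  intro e he
  obtain ⟨x, hx, rfl⟩ := Finset.mem_image.mp he
  obtain ⟨h1, h2⟩ := Finset.mem_product.mp hx
  simp only [D, Finset.mem_filter, Finset.mem_univ, true_and, Sym2.mk_isDiag_iff]
  intro h'
  exact Finset.disjoint_left.mp h h1 (h' ▸ h2)

lemma cross_card {n : ℕ} (q : Finset (Fin n) × Finset (Fin n)) (h : Disjoint q.1 q.2) :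
    (cross q).card = q.1.card * q.2.card := by
  rw [cross, Finset.card_image_of_injOn, Finset.card_product]
  rintro ⟨a, b⟩ h1 ⟨a', b'⟩ h2 heq
  rw [Finset.mem_coe, Finset.mem_product] at h1 h2
  simp only [Sym2.eq_iff] at heq
  rcases heq with ⟨rfl, rfl⟩ | ⟨rfl, rfl⟩
  · rfl
  · exact absurd h2.2 (Finset.disjoint_left.mp h h1.1)

lemma part2_union (n k : ℕ) (p : ℝ) (h0 : 0 ≤ p) (h1 : p ≤ 1) :
    1 - (n.choose k : ℝ) ^ 2 * (1 - p) ^ (k * k) ≤ erProb n p (fun R => KJoined R k) := by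
  set Q := (Finset.univ.powersetCard k ×ˢ Finset.univ.powersetCard k :
    Finset (Finset (Fin n) × Finset (Fin n))).filter (fun q => Disjoint q.1 q.2) with hQ
  have memQ : ∀ q, q ∈ Q ↔ (q.1.card = k ∧ q.2.card = k) ∧ Disjoint q.1 q.2 := by
    intro q; simp [hQ, Finset.mem_powersetCard]
  have hp' : 0 ≤ 1 - p := by linarith
  have indnn : ∀ q : Prop, 0 ≤ ind q := by intro q; unfold ind; split_ifs <;> norm_num
  have key := erProb_ge n p h0 h1 (fun R => KJoined R k)
    (fun R => ∑ q ∈ Q, ind (∀ e ∈ cross q, e ∉ R.edgeSet))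
    (fun R => Finset.sum_nonneg fun q _ => indnn _) ?_
  · refine le_trans ?_ key
    have : ∑ G : SimpleGraph (Fin n), wt n p G * ∑ q ∈ Q, ind (∀ e ∈ cross q, e ∉ G.edgeSet)
        = ∑ q ∈ Q, (1 - p) ^ (k * k) := by
      simp_rw [Finset.mul_sum]
      rw [Finset.sum_comm]
      refine Finset.sum_congr rfl fun q hq => ?_
      obtain ⟨⟨a, b⟩, d⟩ := (memQ q).mp hq
      have := prob_key n p ∅ (cross q) (by simp) (cross_sub q d) (by simp)
      rw [cross_card q d, a, b] at this
      simpa using this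
    rw [this, Finset.sum_const, nsmul_eq_mul]
    have hc : (Q.card : ℝ) ≤ (n.choose k : ℝ) ^ 2 := by
      have : Q.card ≤ n.choose k ^ 2 := by
        refine (Finset.card_filter_le _ _).trans (le_of_eq ?_)
        rw [Finset.card_product, Finset.card_powersetCard, Finset.card_univ, Fintype.card_fin, sq]
      exact_mod_cast this
    have := mul_le_mul_of_nonneg_right hc (pow_nonneg hp' (k * k))
    linarith
  · intro R hR
    unfold KJoined at hR
    push Not at hR
    obtain ⟨A, B, hA, hB, hd, hno⟩ := hR
    have hmem : (A, B) ∈ Q := (memQ _).mpr ⟨⟨hA, hB⟩, hd⟩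
    refine le_trans ?_ (Finset.single_le_sum (f := fun q => ind (∀ e ∈ cross q, e ∉ R.edgeSet))
      (fun q _ => indnn _) hmem)
    rw [ind, if_pos]
    intro e he
    obtain ⟨x, hx, rfl⟩ := Finset.mem_image.mp he
    obtain ⟨h1, h2⟩ := Finset.mem_product.mp hx
    rw [SimpleGraph.mem_edgeSet]
    exact hno _ h1 _ h2

lemma choose_bound (n k : ℕ) (δ : ℝ) (hδ : 0 < δ) (hn : 0 < n) (hk : δ * n ≤ k) :
    (n.choose k : ℝ) ≤ (Real.exp 1 / δ) ^ k := by
  have a : (n.choose k : ℝ) ≤ (n:ℝ) ^ k / k.factorial := Nat.choose_le_pow_div k n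
  have hn' : (0:ℝ) < n := by exact_mod_cast hn
  have b : (k:ℝ) ^ k / k.factorial ≤ Real.exp k :=
    Real.pow_div_factorial_le_exp (k:ℝ) (by positivity) k
  have hf : (0:ℝ) < k.factorial := by exact_mod_cast k.factorial_pos
  rw [div_le_iff₀ hf] at b
  refine a.trans ?_
  rw [div_pow, ← Real.exp_nat_mul, mul_one, div_le_div_iff₀ hf (by positivity), ← mul_pow]
  refine le_trans ?_ b
  exact pow_le_pow_left₀ (by positivity) (by linarith) k

lemma part2_bound (c δ : ℝ) (hc : 0 < c) (hδ : 0 < δ)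
    (h : 2 * Real.exp 1 / δ < Real.exp (c * δ / 2)) (n : ℕ) (hn : 0 < n) (hcn : c ≤ n) :
    1 - (1 / 4 : ℝ) ^ ⌈δ * n⌉₊ ≤ erProb n (c / n) (fun R => KJoined R ⌈δ * n⌉₊) := by
  have hn0 : (0:ℝ) < n := by exact_mod_cast hn
  have h0 : 0 ≤ c / n := by positivity
  have h1 : c / n ≤ 1 := by rw [div_le_one hn0]; exact hcn
  refine le_trans ?_ (part2_union n ⌈δ * n⌉₊ (c / n) h0 h1)
  have hk : δ * n ≤ (⌈δ * n⌉₊ : ℝ) := Nat.le_ceil _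
  set k := ⌈δ * n⌉₊
  have hch := choose_bound n k δ hδ hn hk
  have e1 : 1 - c / n ≤ Real.exp (-(c / n)) := Real.one_sub_le_exp_neg _
  have e2 : (1 - c / n) ^ k ≤ Real.exp (-(c * δ)) := by
    refine (pow_le_pow_left₀ (by linarith) e1 k).trans ?_
    rw [← Real.exp_nat_mul, Real.exp_le_exp]
    have : c * δ ≤ k * (c / n) := by
      have := mul_le_mul_of_nonneg_right hk h0
      have e : δ * n * (c / n) = c * δ := by field_simp
      linarith
    linarith
  have e3 : (1 - c / n) ^ (k * k) ≤ (Real.exp (-(c * δ))) ^ k := by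
    rw [pow_mul]
    exact pow_le_pow_left₀ (pow_nonneg (by linarith) k) e2 k
  have e4 : (n.choose k : ℝ) ^ 2 * (1 - c / n) ^ (k * k) ≤
      ((Real.exp 1 / δ) ^ k) ^ 2 * (Real.exp (-(c * δ))) ^ k :=
    mul_le_mul (pow_le_pow_left₀ (by positivity) hch 2) e3
      (pow_nonneg (by linarith) _) (by positivity)
  have e5 : ((Real.exp 1 / δ) ^ k) ^ 2 * (Real.exp (-(c * δ))) ^ k =
      ((Real.exp 1 / δ) ^ 2 * Real.exp (-(c * δ))) ^ k := by
    rw [mul_pow, ← pow_mul, ← pow_mul, mul_comm k 2]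
  have e6 : (Real.exp 1 / δ) ^ 2 * Real.exp (-(c * δ)) ≤ 1 / 4 := by
    have hx : Real.exp (-(c * δ)) = (Real.exp (c * δ / 2))⁻¹ ^ 2 := by
      rw [← Real.exp_neg, ← Real.exp_nat_mul]; congr 1; push_cast; ring
    have hy : 0 < Real.exp (c * δ / 2) := Real.exp_pos _
    have : Real.exp 1 / δ * (Real.exp (c * δ / 2))⁻¹ ≤ 1 / 2 := by
      rw [← div_eq_mul_inv, div_le_iff₀ hy]
      have : 2 * Real.exp 1 / δ = 2 * (Real.exp 1 / δ) := by ring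
      linarith
    rw [hx, ← mul_pow]
    calc _ ≤ (1 / 2 : ℝ) ^ 2 := pow_le_pow_left₀ (by positivity) this 2
      _ = 1 / 4 := by norm_num
  have e7 := pow_le_pow_left₀ (by positivity) e6 k
  linarith

end ER

/-- For a constant `c > 0` and `R ~ G(n, c/n)`: with high probability
`cn/4 ≤ e(R) ≤ cn` and `Y(R) ≤ 2c²n`; moreover, for every constant `δ > 0` with
`2e/δ < e^{cδ/2}`, with high probability `R` is `⌈δn⌉`-joined. -/
theorem stmt_8 (c : ℝ) (hc : 0 < c) :
    Tendsto
      (fun n => erProb n (c / n) (fun R =>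
        c * n / 4 ≤ (R.edgeSet.ncard : ℝ) ∧ (R.edgeSet.ncard : ℝ) ≤ c * n ∧
          ((numNonIsolatedEdges R : ℝ) ≤ 2 * c ^ 2 * n)))
      atTop (nhds 1) ∧
    ∀ δ : ℝ, 0 < δ → 2 * Real.exp 1 / δ < Real.exp (c * δ / 2) →
      Tendsto
        (fun n => erProb n (c / n) (fun R => KJoined R ⌈δ * n⌉₊))
        atTop (nhds 1) := by
  have ev : ∀ᶠ n : ℕ in atTop, 4 ≤ n ∧ c ≤ (n : ℝ) :=
    (eventually_ge_atTop 4).and (tendsto_natCast_atTop_atTop.eventually_ge_atTop c)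
  have up : ∀ n : ℕ, 4 ≤ n → c ≤ (n : ℝ) → ∀ P, erProb n (c / n) P ≤ 1 := by
    intro n h4 hcn P
    have hn0 : (0:ℝ) < n := by exact_mod_cast (by omega : 0 < n)
    exact ER.erProb_le_one n _ (by positivity) (by rw [div_le_one hn0]; exact hcn) P
  constructor
  · refine tendsto_of_tendsto_of_tendsto_of_le_of_le'
      (g := fun n : ℕ => 1 - (40 / c + 2 / c ^ 2) / (n : ℝ)) (h := fun _ => 1) ?_
      tendsto_const_nhds ?_ ?_
    · have := (tendsto_const_div_atTop_nhds_zero_nat (40 / c + 2 / c ^ 2)).const_sub 1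
      simpa using this
    · filter_upwards [ev] with n hn using ER.part1_bound c hc n hn.1 hn.2
    · filter_upwards [ev] with n hn using up n hn.1 hn.2 _
  · intro δ hδ h
    refine tendsto_of_tendsto_of_tendsto_of_le_of_le'
      (g := fun n : ℕ => 1 - (1 / 4 : ℝ) ^ ⌈δ * n⌉₊) (h := fun _ => 1) ?_
      tendsto_const_nhds ?_ ?_
    · have hk : Tendsto (fun n : ℕ => ⌈δ * (n : ℝ)⌉₊) atTop atTop :=
        tendsto_nat_ceil_atTop.comp (tendsto_natCast_atTop_atTop.const_mul_atTop hδ)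
      have := ((tendsto_pow_atTop_nhds_zero_of_lt_one (r := (1 / 4 : ℝ)) (by norm_num)
        (by norm_num)).comp hk).const_sub 1
      simpa using this
    · filter_upwards [ev] with n hn using ER.part2_bound c δ hc hδ h n (by omega) hn.2
    · filter_upwards [ev] with n hn using up n hn.1 hn.2 _
end

section
/- Let r ≥ 2 be an integer, let n be sufficiently large, let b be an integer with 1 ≤ b ≤ 2^{-10} r^{-2} n, and set α = (r+1)/(2r). Let G be a graph on n vertices with minimum degree δ(G) ≥ αn and let χ be an r-colouring of E(G). If every Hamilton cycle of G has colour bias at most b, then there exists a set U ⊆ V(G) with |U| ≥ (r+1)n/(2r) and a colour c* ∈ {1,…,r} such that every matching in the induced subgraph G[U] containing no edge of colour c* has fewer than 2^9 r b edges. -/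
open SimpleGraph
open scoped Classical

/-- `M` is a matching in `G`: a set of pairwise vertex-disjoint edges of `G`. -/
def MatchingIn {V : Type*} (M : Finset (Sym2 V)) (G : SimpleGraph V) : Prop :=
  (∀ e ∈ M, e ∈ G.edgeSet) ∧
  ∀ e ∈ M, ∀ f ∈ M, e ≠ f → ∀ v : V, ¬(v ∈ e ∧ v ∈ f)


namespace HB

variable {V : Type*}

/-- Multiset of consecutive pairs of a list. -/
def pe : List V → Multiset (Sym2 V)
  | [] => 0
  | [_] => 0
  | a :: b :: l => s(a, b) ::ₘ pe (b :: l)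

lemma pe_split (p : List V) (a : V) (q : List V) :
    pe (p ++ a :: q) = pe (p ++ [a]) + pe (a :: q) := by
  induction p with
  | nil => simp [pe]
  | cons b p ih =>
    cases p with
    | nil => simp [pe]
    | cons c p => simp only [List.cons_append, pe, Multiset.cons_add] at ih ⊢; rw [ih]

lemma pe_join (p : List V) (a b : V) (q : List V) :
    pe (p ++ a :: b :: q) = s(a, b) ::ₘ (pe (p ++ [a]) + pe (b :: q)) := by
  rw [pe_split]; simp [pe]

lemma pe_reverse (l : List V) : pe l.reverse = pe l := by
  induction l with
  | nil => rfl
  | cons a l ih =>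
    cases l with
    | nil => rfl
    | cons b l =>
      have : (a :: b :: l).reverse = l.reverse ++ b :: a :: [] := by simp
      rw [this, pe_join]
      have h2 : l.reverse ++ [b] = (b :: l).reverse := by simp
      rw [h2, ih]
      simp [pe, Sym2.eq_swap]

lemma pe_append_le (p q : List V) : pe p + pe q ≤ pe (p ++ q) := by
  rcases List.eq_nil_or_concat p with rfl | ⟨p, a, rfl⟩
  · simp [pe]
  · cases q with
    | nil => simp [pe]
    | cons b q =>
      have : (p.concat a) ++ b :: q = p ++ a :: b :: q := by simp
      rw [this, pe_join, List.concat_eq_append]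
      exact Multiset.le_cons_self _ _

lemma pe_mem {l : List V} {e : Sym2 V} (h : e ∈ pe l) :
    ∃ p x y q, l = p ++ x :: y :: q ∧ e = s(x, y) := by
  induction l with
  | nil => simp [pe] at h
  | cons a l ih =>
    cases l with
    | nil => simp [pe] at h
    | cons b l =>
      simp only [pe, Multiset.mem_cons] at h
      rcases h with rfl | h
      · exact ⟨[], a, b, l, by simp, rfl⟩
      · obtain ⟨p, x, y, q, h1, h2⟩ := ih h
        exact ⟨a :: p, x, y, q, by simp [h1], h2⟩

lemma pe_mem_vert {l : List V} {e : Sym2 V} (h : e ∈ pe l) {w : V} (hw : w ∈ e) : w ∈ l := by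
  obtain ⟨p, x, y, q, rfl, rfl⟩ := pe_mem h
  rcases Sym2.mem_iff.1 hw with rfl | rfl <;> simp

lemma card_pe (a : V) (l : List V) : (pe (a :: l)).card = l.length := by
  induction l generalizing a with
  | nil => rfl
  | cons b l ih => simp [pe, ih]

/-- Edges of the closed walk through `a :: t` and back to `a`. -/
def cyc (a : V) (t : List V) : Multiset (Sym2 V) := pe (a :: t ++ [a])

/-- `a :: t` lists every vertex exactly once. -/
def Ham (a : V) (t : List V) : Prop := (a :: t).Nodup ∧ ∀ x, x ∈ a :: t

lemma Ham.perm {a b : V} {t u : List V} (h : Ham a t) (hp : (b :: u).Perm (a :: t)) : Ham b u :=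
  ⟨hp.nodup_iff.2 h.1, fun x => hp.mem_iff.2 (h.2 x)⟩

lemma Ham.length {n : ℕ} {a : Fin n} {t : List (Fin n)} (h : Ham a t) : t.length + 1 = n := by
  have h1 := List.toFinset_card_of_nodup h.1
  have h2 : (a :: t).toFinset = Finset.univ := by
    ext x; simpa using h.2 x
  rw [h2] at h1
  simpa using h1.symm

lemma card_cyc (a : V) (t : List V) : (cyc a t).card = t.length + 1 := by
  unfold cyc; rw [List.cons_append, card_pe]; simp

lemma rot {a : V} {t : List V} (h : Ham a t) (b : V) :
    ∃ u, Ham b u ∧ cyc b u = cyc a t := by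
  rcases List.mem_cons.1 (h.2 b) with rfl | hb
  · exact ⟨t, h, rfl⟩
  · obtain ⟨p, q, rfl⟩ := List.append_of_mem hb
    refine ⟨q ++ a :: p, h.perm ?_, ?_⟩
    · have : b :: (q ++ a :: p) = (b :: q) ++ (a :: p) := by simp
      rw [this]
      exact List.perm_append_comm
    · unfold cyc
      have h1 : b :: (q ++ a :: p) ++ [b] = (b :: q) ++ a :: (p ++ [b]) := by simp
      have h2 : a :: (p ++ b :: q) ++ [a] = (a :: p) ++ b :: (q ++ [a]) := by simp
      rw [h1, h2, pe_split, pe_split (a :: p)]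
      simp [add_comm]

lemma cyc_reverse (a : V) (t : List V) : cyc a t.reverse = cyc a t := by
  unfold cyc
  rw [← pe_reverse (a :: t ++ [a])]
  congr 1; simp

lemma cyc_cons (a u : V) (t : List V) {l : List V} {z : V} (h : u :: t = l ++ [z]) :
    cyc a (u :: t) = s(a, u) ::ₘ s(z, a) ::ₘ pe (u :: t) := by
  unfold cyc
  have h1 : a :: (u :: t) ++ [a] = [] ++ a :: u :: (t ++ [a]) := by simp
  rw [h1, pe_join]
  have h2 : u :: (t ++ [a]) = l ++ z :: a :: [] := by
    rw [← List.cons_append, h]; simp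
  rw [h2, pe_join, h]; simp [pe]

lemma hd {x y : V} {t : List V} (h : Ham x t) (hxy : x ≠ y) (he : s(x, y) ∈ cyc x t) :
    ∃ u, Ham x (y :: u) ∧ cyc x (y :: u) = cyc x t := by
  cases t with
  | nil => simp [cyc, pe] at he; exact absurd he.symm hxy
  | cons b t =>
    obtain ⟨l, z, hl⟩ : ∃ l z, b :: t = l ++ [z] :=
      ⟨_, _, (List.dropLast_append_getLast (List.cons_ne_nil b t)).symm⟩
    have hn := h.1
    rw [cyc_cons x b t hl] at he
    simp only [Multiset.mem_cons] at he
    rcases he with he | he | he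
    · have : y = b := Sym2.congr_right.1 he
      subst this
      exact ⟨t, h, rfl⟩
    · have : y = z := Sym2.congr_right.1 (he.trans Sym2.eq_swap)
      subst this
      refine ⟨l.reverse, ?_, ?_⟩
      · have h3 : y :: l.reverse = (b :: t).reverse := by rw [hl]; simp
        rw [h3]
        exact h.perm ((List.reverse_perm _).cons x)
      · have h3 : y :: l.reverse = (b :: t).reverse := by rw [hl]; simp
        rw [h3, cyc_reverse]
    · have := pe_mem_vert he (w := x) (by simp)
      exact absurd this (List.nodup_cons.1 hn).1

/-- Move the vertex `v` into another edge of the cycle. -/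
lemma flip {a : V} {t : List V} (h : Ham a t) {R : Multiset (Sym2 V)} {v x y x' y' : V}
    (hvx : v ≠ x) (hvy : v ≠ y) (hxy : x ≠ y) (hvx' : v ≠ x') (hvy' : v ≠ y')
    (hc : cyc a t = R + {s(x, v), s(v, y), s(x', y')}) :
    ∃ a' t', Ham a' t' ∧ cyc a' t' = R + {s(x, y), s(x', v), s(v, y')} := by
  obtain ⟨u, hu, hcu⟩ := rot h v
  rw [← hcu] at hc
  obtain ⟨w, hw, hcw⟩ := hd hu hvx (by rw [hc, Sym2.eq_swap]; simp)
  rw [← hcw] at hc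
  clear hcw hcu hu u h
  have hvn := (List.nodup_cons.1 hw.1).1
  obtain ⟨l, z, hl⟩ : ∃ l z, x :: w = l ++ [z] :=
      ⟨_, _, (List.dropLast_append_getLast (List.cons_ne_nil x w)).symm⟩
  have hcc := cyc_cons v x w hl
  have hz : z = y := by
    have : s(v, y) ∈ cyc v (x :: w) := by rw [hc]; simp
    rw [hcc] at this
    simp only [Multiset.mem_cons] at this
    rcases this with he | he | he
    · have : y = x := Sym2.congr_right.1 he
      exact absurd this.symm hxy
    · rw [Sym2.eq_swap (a := z)] at he
      have : y = z := Sym2.congr_right.1 he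
      exact this.symm
    · exact absurd (pe_mem_vert he (w := v) (by simp)) hvn
  subst hz
  have he : s(x', y') ∈ pe (x :: w) := by
    have : s(x', y') ∈ cyc v (x :: w) := by rw [hc]; simp
    rw [hcc] at this
    simp only [Multiset.mem_cons] at this
    rcases this with he | he | he
    · exfalso
      have : v ∈ s(x', y') := by rw [he]; simp
      simp at this; tauto
    · exfalso
      have : v ∈ s(x', y') := by rw [he]; simp
      simp at this; tauto
    · exact he
  obtain ⟨p, c, d, q, hpq, hcd⟩ := pe_mem he
  obtain ⟨p1, hp1⟩ : ∃ p1, p ++ [c] = x :: p1 := by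
    cases p with
    | nil => simp at hpq; exact ⟨[], by simp [hpq]⟩
    | cons b p => simp at hpq; exact ⟨p ++ [c], by simp [hpq]⟩
  obtain ⟨q1, hq1⟩ : ∃ q1, d :: q = q1 ++ [z] := by
    rcases List.eq_nil_or_concat (d :: q) with hh | ⟨q1, b, hh⟩
    · simp at hh
    · rw [List.concat_eq_append] at hh
      have : l ++ [z] = (p ++ [c] ++ q1) ++ [b] := by
        rw [← hl, hpq, show p ++ c :: d :: q = p ++ [c] ++ (d :: q) by simp, hh]; simp
      have := (List.append_inj' this rfl).2
      simp at this
      exact ⟨q1, by rw [hh, this]⟩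
  refine ⟨v, d :: (q ++ p ++ [c]), hw.perm ?_, ?_⟩
  · rw [hpq]
    refine List.Perm.cons _ ?_
    have h1 : d :: (q ++ p ++ [c]) = (d :: q) ++ (p ++ [c]) := by simp
    have h2 : p ++ c :: d :: q = (p ++ [c]) ++ (d :: q) := by simp
    rw [h1, h2]; exact List.perm_append_comm
  · rw [cyc_cons v d (q ++ p ++ [c]) (l := d :: (q ++ p)) (z := c) (by simp)]
    have h1 : d :: (q ++ p ++ [c]) = q1 ++ z :: x :: p1 := by
      rw [show d :: (q ++ p ++ [c]) = (d :: q) ++ (p ++ [c]) by simp, hq1, hp1]; simp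
    rw [h1, pe_join, ← hq1, ← hp1]
    rw [hcc, hpq, pe_join, hcd, Sym2.eq_swap (a := v), Sym2.eq_swap (a := z) (b := v)] at hc
    have hR : R = pe (p ++ [c]) + pe (d :: q) := by
      have : (pe (p ++ [c]) + pe (d :: q)) + {s(x, v), s(v, z), s(c, d)}
          = R + {s(x, v), s(v, z), s(c, d)} := by
        rw [← hc]
        ext e
        simp only [Multiset.count_add, Multiset.insert_eq_cons, Multiset.count_cons,
          Multiset.count_singleton]
        omega
      exact (add_right_cancel this).symm
    have hs : ({s(x, z), s(x', v), s(v, y')} : Multiset (Sym2 V))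
        = {s(x, z), s(c, v), s(v, d)} := by
      rcases Sym2.eq_iff.1 hcd with ⟨rfl, rfl⟩ | ⟨rfl, rfl⟩
      · rfl
      · rw [Sym2.eq_swap (a := x') (b := v), Sym2.eq_swap (a := v) (b := y')]
        congr 1
        exact Multiset.cons_swap _ _ _
    rw [hs, hR, Sym2.eq_swap (a := z) (b := x)]
    ext e
    simp only [Multiset.count_add, Multiset.insert_eq_cons, Multiset.count_cons,
          Multiset.count_singleton]
    omega

lemma walk_of {G : SimpleGraph V} (l : List V) : ∀ (a b : V),
    (∀ e ∈ pe (a :: l ++ [b]), e ∈ G.edgeSet) →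
    ∃ w : G.Walk a b, w.support = a :: l ++ [b] ∧ (w.edges : Multiset (Sym2 V)) = pe (a :: l ++ [b]) := by
  induction l with
  | nil =>
    intro a b h
    have : G.Adj a b := by simpa [pe] using h
    exact ⟨.cons this .nil, by simp, by simp [pe]⟩
  | cons c l ih =>
    intro a b h
    simp only [List.cons_append, pe, Multiset.mem_cons, forall_eq_or_imp] at h
    obtain ⟨w, h1, h2⟩ := ih c b h.2
    have hac : G.Adj a c := h.1
    refine ⟨.cons hac w, by simp [h1], ?_⟩
    simp only [Walk.edges_cons, List.cons_append, pe]
    rw [← Multiset.cons_coe, h2]; rfl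

lemma ham_walk [DecidableEq V] {G : SimpleGraph V} {a : V} {t : List V} (h : Ham a t)
    (ht : 2 ≤ t.length) (he : ∀ e ∈ cyc a t, e ∈ G.edgeSet) :
    ∃ w : G.Walk a a, w.IsHamiltonianCycle ∧ (w.edges : Multiset (Sym2 V)) = cyc a t := by
  obtain ⟨w, h1, h2⟩ := walk_of t a a he
  have hnil : ¬ w.Nil := by
    intro hn
    have := Walk.nil_iff_support_eq.1 hn
    rw [h1] at this
    simp at this
  have h3 : w.tail.support = t ++ [a] := by
    rw [Walk.support_tail_of_not_nil _ hnil, h1]; simp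
  have hp : (t ++ [a]).Perm (a :: t) := List.perm_append_comm (l₁ := t) (l₂ := [a])
  have hpath : w.tail.IsPath := by
    rw [Walk.isPath_def, h3]; exact hp.nodup_iff.2 h.1
  refine ⟨w, ⟨Walk.isCycle_iff_isPath_tail_and_le_length.2 ⟨hpath, ?_⟩,
    hpath.isHamiltonian_of_mem ?_⟩, h2⟩
  · have := congrArg List.length h1
    simp at this; omega
  · intro x; rw [h3]; exact hp.mem_iff.2 (h.2 x)

lemma pe_nodup {l : List V} (h : l.Nodup) : (pe l).Nodup := by
  induction l with
  | nil => simp [pe]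
  | cons a l ih =>
    cases l with
    | nil => simp [pe]
    | cons b l =>
      rw [List.nodup_cons] at h
      simp only [pe, Multiset.nodup_cons]
      exact ⟨fun hh => h.1 (pe_mem_vert hh (by simp)), ih h.2⟩

lemma count_pairs (X Y : Finset V) (F : Multiset (Sym2 V)) (u : List V) : ∀ y : V,
    (∀ p c d q, y :: u = p ++ c :: d :: q → c ∈ X → d ∈ Y → s(c, d) ∈ F) →
    (y :: u).countP (fun z => decide (z ∈ X)) + u.countP (fun z => decide (z ∈ Y))
      ≤ u.length + 1 + (pe (y :: u)).countP (· ∈ F) := by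
  induction u with
  | nil =>
    intro y _
    simp only [List.countP_cons, List.countP_nil, List.length_nil, pe]
    split_ifs <;> simp
  | cons b u ih =>
    intro y h
    have h1 := ih b (fun p c d q hh => h (y :: p) c d q (by simp [hh]))
    have h2 := h [] y b u rfl
    rw [List.countP_cons (a := y), List.countP_cons (a := b) (l := u) (p := fun z => decide (z ∈ Y))]
    simp only [pe, Multiset.countP_cons, List.length_cons]
    by_cases hy : y ∈ X <;> by_cases hb : b ∈ Y <;> simp only [hy, hb, decide_true, decide_false,
      if_true, if_false, Bool.false_eq_true]
    · rw [if_pos (h2 hy hb)]; omega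
    all_goals omega

lemma card_le_countP (X : Finset V) (l : List V) (h : ∀ x ∈ X, x ∈ l) :
    X.card ≤ l.countP (fun z => decide (z ∈ X)) := by
  rw [List.countP_eq_length_filter]
  refine le_trans (Finset.card_le_card ?_) (List.toFinset_card_le _)
  intro x hx
  simp [hx, h x hx]

lemma find_pair (X Y : Finset V) (F : Multiset (Sym2 V)) (u : List V) (y : V)
    (hn : (y :: u).Nodup) (hX : ∀ x ∈ X, x ∈ y :: u) (hY : ∀ x ∈ Y, x ∈ u)
    (hc : u.length + 1 + F.card < X.card + Y.card) :
    ∃ p c d q, y :: u = p ++ c :: d :: q ∧ c ∈ X ∧ d ∈ Y ∧ s(c, d) ∉ F := by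
  by_contra hcon
  push Not at hcon
  have h1 := count_pairs X Y F u y hcon
  have h2 := card_le_countP X _ hX
  have h3 := card_le_countP Y _ hY
  have h4 : (pe (y :: u)).countP (· ∈ F) ≤ F.card := by
    rw [Multiset.countP_eq_card_filter]
    refine Multiset.card_le_card ?_
    rw [Multiset.le_iff_subset ((pe_nodup hn).filter _)]
    intro e he
    exact (Multiset.mem_filter.1 he).2
  omega

lemma embed {n : ℕ} (G : SimpleGraph (Fin n)) (F : Multiset (Sym2 (Fin n)))
    (hF : ∀ e ∈ F, e ∈ G.edgeSet) (δ : ℕ)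
    (hδ : ∀ v, δ ≤ (Finset.univ.filter (G.Adj v)).card) (h : n + F.card ≤ 2 * δ) (hn : 2 ≤ n) :
    ∀ (k : ℕ) (a : Fin n) (t : List (Fin n)), Ham a t → F ≤ cyc a t →
      (cyc a t).countP (· ∉ G.edgeSet) = k →
      ∃ a' t', Ham a' t' ∧ F ≤ cyc a' t' ∧ ∀ e ∈ cyc a' t', e ∈ G.edgeSet := by
  intro k
  induction k using Nat.strong_induction_on with
  | _ k ih =>
  intro a t hat hFt hk
  by_cases hall : ∀ e ∈ cyc a t, e ∈ G.edgeSet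
  · exact ⟨a, t, hat, hFt, hall⟩
  push Not at hall
  obtain ⟨e, he, heG⟩ := hall
  obtain ⟨x, y, rfl⟩ : ∃ x y, e = s(x, y) := by
    induction e using Sym2.ind with
    | _ x y => exact ⟨x, y, rfl⟩
  obtain ⟨t1, ht1, hc1⟩ := rot hat x
  rw [← hc1] at he hFt hk
  have hxy : x ≠ y := by
    rintro rfl
    obtain ⟨w, hw⟩ : ∃ w, w = t1 := ⟨_, rfl⟩
    have hl := ht1.length
    cases t1 with
    | nil => simp at hl; omega
    | cons b t2 =>
      obtain ⟨l, z, hl⟩ : ∃ l z, b :: t2 = l ++ [z] :=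
        ⟨_, _, (List.dropLast_append_getLast (List.cons_ne_nil b t2)).symm⟩
      have hnd := (List.nodup_cons.1 ht1.1).1
      rw [cyc_cons x b t2 hl] at he
      simp only [Multiset.mem_cons] at he
      rcases he with he | he | he
      · have : x = b := Sym2.congr_right.1 he
        subst this
        simp at hnd
      · have : x = z := Sym2.congr_right.1 (he.trans Sym2.eq_swap)
        subst this
        rw [hl] at hnd
        simp at hnd
      · exact hnd (pe_mem_vert he (by simp))
  obtain ⟨u, hu, hcu⟩ := hd ht1 hxy he
  rw [← hcu] at he hFt hk
  have hlen := hu.length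
  simp only [List.length_cons] at hlen
  have hnd := List.nodup_cons.1 hu.1
  have hxyG : ¬ G.Adj x y := heG
  obtain ⟨p, c, d, q, hpq, hcX, hdY, hcd⟩ := find_pair (Finset.univ.filter (G.Adj x))
    (Finset.univ.filter (G.Adj y)) F u y hnd.2
    (by
      intro w hw
      have hw' : G.Adj x w := by simpa using hw
      rcases List.mem_cons.1 (hu.2 w) with rfl | hh
      · exact absurd hw' (G.loopless.irrefl _)
      · exact hh)
    (by
      intro w hw
      have hw' : G.Adj y w := by simpa using hw
      rcases List.mem_cons.1 (hu.2 w) with rfl | hh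
      · exact absurd hw'.symm hxyG
      · rcases List.mem_cons.1 hh with rfl | hh
        · exact absurd hw' (G.loopless.irrefl _)
        · exact hh)
    (by have := hδ x; have := hδ y; omega)
  have hcX' : G.Adj x c := by simpa using hcX
  have hdY' : G.Adj y d := by simpa using hdY
  obtain ⟨p1, hp1⟩ : ∃ p1, p ++ [c] = y :: p1 := by
    cases p with
    | nil => simp at hpq; exact ⟨[], by simp [hpq]⟩
    | cons b p => simp at hpq; exact ⟨p ++ [c], by simp [hpq]⟩
  obtain ⟨q1, z, hq1⟩ : ∃ q1 z, d :: q = q1 ++ [z] :=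
    ⟨_, _, (List.dropLast_append_getLast (List.cons_ne_nil d q)).symm⟩
  have hold : cyc x (y :: u) = s(x, y) ::ₘ s(z, x) ::ₘ s(c, d) ::ₘ
      (pe (p ++ [c]) + pe (d :: q)) := by
    rw [cyc_cons x y u (l := p ++ [c] ++ q1) (z := z) (by rw [hpq, List.append_assoc, ← hq1]; simp),
      hpq, pe_join]
  have hnew : cyc x (c :: (p.reverse ++ d :: q)) = s(x, c) ::ₘ s(z, x) ::ₘ s(y, d) ::ₘ
      (pe (p ++ [c]) + pe (d :: q)) := by
    have h1 : c :: (p.reverse ++ d :: q) = p1.reverse ++ y :: d :: q := by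
      have : c :: p.reverse = p1.reverse ++ [y] := by
        have := congrArg List.reverse hp1
        simpa using this
      rw [← List.cons_append, this]; simp
    rw [cyc_cons x c _ (l := p1.reverse ++ [y] ++ q1) (z := z)
      (by rw [h1, List.append_assoc, ← hq1]; simp), h1, pe_join]
    have h2 : p1.reverse ++ [y] = (p ++ [c]).reverse := by rw [hp1]; simp
    rw [h2, pe_reverse]
  have hF1 : F ≤ s(z, x) ::ₘ (pe (p ++ [c]) + pe (d :: q)) := by
    rw [hold] at hFt
    have h1 : s(x, y) ∉ F := fun hh => heG (hF _ hh)
    rw [Multiset.le_cons_of_notMem h1, Multiset.cons_swap, Multiset.le_cons_of_notMem hcd] at hFt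
    exact hFt
  have hbad : (cyc x (c :: (p.reverse ++ d :: q))).countP (· ∉ G.edgeSet) < k := by
    rw [← hk, hold, hnew]
    have g1 : s(x, c) ∈ G.edgeSet := hcX'
    have g2 : s(y, d) ∈ G.edgeSet := hdY'
    simp only [Multiset.countP_cons, heG, g1, g2, not_true, not_false_iff, if_true, if_false]
    omega
  refine ih _ hbad x (c :: (p.reverse ++ d :: q)) (hu.perm ?_) ?_ rfl
  · rw [hpq]
    refine List.Perm.cons _ ?_
    have h1 : p ++ c :: d :: q = (p ++ [c]) ++ (d :: q) := by simp
    have h2 : c :: (p.reverse ++ d :: q) = (p ++ [c]).reverse ++ (d :: q) := by simp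
    rw [h1, h2]
    exact (List.reverse_perm _).append_right _
  · rw [hnew, Multiset.cons_swap]
    refine hF1.trans ?_
    refine Multiset.cons_le_cons _ ?_
    exact (Multiset.le_cons_self _ _).trans (Multiset.le_cons_self _ _)

/-- A gadget: a vertex with two candidate edges. -/
structure Gad (V : Type*) where
  v : V
  x : V
  y : V
  x' : V
  y' : V

namespace Gad

def F1 (g : Gad V) : Multiset (Sym2 V) := {s(g.x, g.v), s(g.v, g.y), s(g.x', g.y')}
def F2 (g : Gad V) : Multiset (Sym2 V) := {s(g.x, g.y), s(g.x', g.v), s(g.v, g.y')}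
def verts (g : Gad V) : List V := [g.x, g.v, g.y, g.x', g.y']

def Good {C : Type*} (G : SimpleGraph V) (χ : Sym2 V → C) (g : Gad V) : Prop :=
  (∀ e ∈ g.F1, e ∈ G.edgeSet) ∧ (∀ e ∈ g.F2, e ∈ G.edgeSet) ∧ g.verts.Nodup ∧
    g.F1.map χ ≠ g.F2.map χ

end Gad

lemma multi_flip (P : Gad V → Prop) [DecidablePred P] (gs : List (Gad V)) : ∀ (a : V) (t : List V)
    (R : Multiset (Sym2 V)), Ham a t → (∀ g ∈ gs, g.verts.Nodup) →
    cyc a t = R + (gs.map Gad.F1).sum →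
    ∃ a' t', Ham a' t' ∧
      cyc a' t' = R + (gs.map (fun g => if P g then g.F2 else g.F1)).sum := by
  induction gs with
  | nil => intro a t R h _ hc; exact ⟨a, t, h, by simpa using hc⟩
  | cons g gs ih =>
    intro a t R h hg hc
    have hgs : ∀ g ∈ gs, g.verts.Nodup := fun g' h' => hg g' (by simp [h'])
    by_cases hP : P g
    · have hn := hg g (by simp)
      simp only [Gad.verts, List.nodup_cons, List.mem_cons, not_or, List.not_mem_nil] at hn
      obtain ⟨a1, t1, h1, hc1⟩ := flip h (R := R + (gs.map Gad.F1).sum) (v := g.v) (x := g.x)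
        (y := g.y) (x' := g.x') (y' := g.y') (by tauto) (by tauto) (by tauto) (by tauto) (by tauto)
        (by rw [hc, List.map_cons, List.sum_cons, add_comm (Gad.F1 g), ← add_assoc]; rfl)
      obtain ⟨a2, t2, h2, hc2⟩ := ih a1 t1 (R + g.F2) h1 hgs (by
        rw [hc1, add_assoc, add_assoc, add_comm g.F2]; rfl)
      exact ⟨a2, t2, h2, by rw [hc2, List.map_cons, List.sum_cons, if_pos hP, add_assoc]⟩
    · obtain ⟨a2, t2, h2, hc2⟩ := ih a t (R + g.F1) h hgs (by
        rw [hc, List.map_cons, List.sum_cons, add_assoc])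
      exact ⟨a2, t2, h2, by rw [hc2, List.map_cons, List.sum_cons, if_neg hP, add_assoc]⟩

lemma F1_le (g : Gad V) : g.F1 ≤ pe g.verts := by
  rw [Multiset.le_iff_count]
  intro e
  simp only [Gad.F1, Gad.verts, pe, Multiset.insert_eq_cons, Multiset.count_cons,
    Multiset.count_singleton, Multiset.count_zero]
  omega

lemma sum_F1_le (gs : List (Gad V)) : (gs.map Gad.F1).sum ≤ pe (gs.flatMap Gad.verts) := by
  induction gs with
  | nil => simp
  | cons g gs ih =>
    rw [List.map_cons, List.sum_cons, List.flatMap_cons]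
    exact (add_le_add (F1_le g) ih).trans (pe_append_le _ _)

lemma pe_le_cyc (a : V) (t : List V) : pe (a :: t) ≤ cyc a t := by
  have := pe_append_le (a :: t) [a]
  simpa [cyc, pe] using this

lemma start {n : ℕ} (hn : 0 < n) (gs : List (Gad (Fin n))) (h : (gs.flatMap Gad.verts).Nodup) :
    ∃ a t, Ham a t ∧ (gs.map Gad.F1).sum ≤ cyc a t := by
  set l := gs.flatMap Gad.verts with hl
  set m := (Finset.univ.filter (fun x : Fin n => x ∉ l)).toList with hm
  have hmem : ∀ x, x ∈ l ++ m := by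
    intro x
    by_cases hx : x ∈ l <;> simp [hm, hx]
  have hnd : (l ++ m).Nodup := by
    rw [List.nodup_append']
    refine ⟨h, Finset.nodup_toList _, ?_⟩
    intro x hx hx'
    simp [hm] at hx'
    exact hx' hx
  have hle : (gs.map Gad.F1).sum ≤ pe (l ++ m) :=
    (sum_F1_le gs).trans ((Multiset.le_add_right _ _).trans (pe_append_le _ _))
  cases hlm : l ++ m with
  | nil => have := hmem ⟨0, hn⟩; rw [hlm] at this; simp at this
  | cons a t =>
    rw [hlm] at hmem hnd hle
    exact ⟨a, t, ⟨hnd, hmem⟩, hle.trans (pe_le_cyc a t)⟩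

lemma sum_max {C : Type*} [Fintype C] [DecidableEq C] (A B : Multiset C) (h : A.card = B.card)
    (hne : A ≠ B) :
    A.card + 1 ≤ ∑ c, (if A.count c < B.count c then B.count c else A.count c) := by
  have hA : ∑ c, A.count c = A.card := Multiset.sum_count_eq_card (by simp)
  have : ∃ c, A.count c < B.count c := by
    by_contra hcon
    push Not at hcon
    exact hne (Multiset.eq_of_le_of_card_le (Multiset.le_iff_count.2 hcon) h.le).symm
  obtain ⟨c, hc⟩ := this
  rw [← hA]
  refine Nat.succ_le_of_lt (Finset.sum_lt_sum ?_ ⟨c, Finset.mem_univ _, ?_⟩)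
  · intro c _; split_ifs <;> omega
  · rw [if_pos hc]; exact hc

lemma count_map_sum {C : Type*} [DecidableEq C] (χ : Sym2 V → C) (c : C) (f : Gad V → Multiset (Sym2 V))
    (gs : List (Gad V)) :
    ((gs.map f).sum.map χ).count c = (gs.map (fun g => ((f g).map χ).count c)).sum := by
  induction gs with
  | nil => simp
  | cons g gs ih => simp [ih]

lemma mem_map_sum (f : Gad V → Multiset (Sym2 V)) (gs : List (Gad V)) {e : Sym2 V}
    (h : e ∈ (gs.map f).sum) : ∃ g ∈ gs, e ∈ f g := by
  induction gs with
  | nil => simp at h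
  | cons g gs ih =>
    rw [List.map_cons, List.sum_cons, Multiset.mem_add] at h
    rcases h with h | h
    · exact ⟨g, by simp, h⟩
    · obtain ⟨g', h1, h2⟩ := ih h
      exact ⟨g', by simp [h1], h2⟩

lemma card_F1 (g : Gad V) : g.F1.card = 3 := by simp [Gad.F1]
lemma card_F2 (g : Gad V) : g.F2.card = 3 := by simp [Gad.F2]

lemma card_sum_F1 (gs : List (Gad V)) : (gs.map Gad.F1).sum.card = 3 * gs.length := by
  induction gs with
  | nil => simp
  | cons g gs ih => simp [ih, card_F1]; ring

lemma sum_gain {C : Type*} [Fintype C] [DecidableEq C] (G : SimpleGraph V) (χ : Sym2 V → C) (gs : List (Gad V))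
    (h : ∀ g ∈ gs, g.Good G χ) :
    4 * gs.length ≤ ∑ c, (gs.map (fun g => ((if (g.F1.map χ).count c < (g.F2.map χ).count c
      then g.F2 else g.F1).map χ).count c)).sum := by
  induction gs with
  | nil => simp
  | cons g gs ih =>
    have h1 := ih (fun g' h' => h g' (by simp [h']))
    have h2 := sum_max (g.F1.map χ) (g.F2.map χ) (by simp [card_F1, card_F2])
      (h g (by simp)).2.2.2
    simp only [List.map_cons, List.sum_cons, Finset.sum_add_distrib, List.length_cons]
    simp only [Multiset.card_map, card_F1] at h2
    have h3 : ∀ c, ((if (g.F1.map χ).count c < (g.F2.map χ).count c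
      then g.F2 else g.F1).map χ).count c = if (g.F1.map χ).count c < (g.F2.map χ).count c
      then (g.F2.map χ).count c else (g.F1.map χ).count c := by
      intro c; split_ifs <;> rfl
    simp only [h3]
    omega

/-- Few disjoint gadgets. -/
lemma few {n r b δ : ℕ} (hn : 3 ≤ n) (G : SimpleGraph (Fin n)) (χ : Sym2 (Fin n) → Fin r)
    (hδ : ∀ v, δ ≤ (Finset.univ.filter (G.Adj v)).card)
    (hH : ∀ a t, Ham a t → (∀ e ∈ cyc a t, e ∈ G.edgeSet) →
      ∀ c, r * ((cyc a t).map χ).count c ≤ n + r * b)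
    (gs : List (Gad (Fin n))) (hg : ∀ g ∈ gs, g.Good G χ) (hnd : (gs.flatMap Gad.verts).Nodup)
    (hr : 0 < r)
    (hlen : n + 3 * gs.length ≤ 2 * δ) : gs.length ≤ r * b := by
  obtain ⟨a0, t0, h0, hle0⟩ := start (by omega) gs hnd
  have hFG : ∀ e ∈ (gs.map Gad.F1).sum, e ∈ G.edgeSet := by
    intro e he
    obtain ⟨g, hgg, heg⟩ := mem_map_sum _ _ he
    exact (hg g hgg).1 e heg
  obtain ⟨a, t, hat, hle, hG⟩ := embed G _ hFG δ hδ (by rw [card_sum_F1]; exact hlen) (by omega)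
    _ a0 t0 h0 hle0 rfl
  obtain ⟨R, hR⟩ := Multiset.le_iff_exists_add.1 hle
  rw [add_comm] at hR
  have hRG : ∀ e ∈ R, e ∈ G.edgeSet := fun e he => hG e (by rw [hR]; simp [he])
  have hRc : R.card + 3 * gs.length = n := by
    have := congrArg Multiset.card hR
    rw [card_cyc, hat.length, Multiset.card_add, card_sum_F1] at this
    exact this.symm
  have key : ∀ c, r * ((R.map χ).count c + (gs.map (fun g =>
      ((if (g.F1.map χ).count c < (g.F2.map χ).count c
      then g.F2 else g.F1).map χ).count c)).sum) ≤ n + r * b := by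
    intro c
    obtain ⟨a', t', h', hc'⟩ := multi_flip (fun g => (g.F1.map χ).count c < (g.F2.map χ).count c)
      gs a t R hat (fun g h => (hg g h).2.2.1) hR
    have := hH a' t' h' (by
      intro e he
      rw [hc', Multiset.mem_add] at he
      rcases he with he | he
      · exact hRG e he
      · obtain ⟨g, hgg, heg⟩ := mem_map_sum _ _ he
        split_ifs at heg
        · exact (hg g hgg).2.1 e heg
        · exact (hg g hgg).1 e heg) c
    rw [hc', Multiset.map_add, Multiset.count_add, count_map_sum] at this
    exact this
  have hsum := Finset.sum_le_sum (fun c (_ : c ∈ (Finset.univ : Finset (Fin r))) => key c)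
  rw [← Finset.mul_sum, Finset.sum_add_distrib] at hsum
  have hA : ∑ c, (R.map χ).count c = R.card := by
    rw [Multiset.sum_count_eq_card (by simp)]; simp
  rw [hA] at hsum
  have hgain := sum_gain G χ gs hg
  simp only [Finset.sum_const, Finset.card_univ, Fintype.card_fin, smul_eq_mul] at hsum
  have := Nat.le_of_mul_le_mul_left hsum hr
  omega

section struct

variable {C : Type*} (G : SimpleGraph V) (χ : Sym2 V → C) (S : Finset V)

/-- An edge in the neighbourhood of `v`, avoiding `S`. -/
def Tri (v x y : V) : Prop := G.Adj v x ∧ G.Adj v y ∧ G.Adj x y ∧ x ∉ S ∧ y ∉ S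

lemma eqv (hS : ∀ g : Gad V, g.Good G χ → ∃ w ∈ g.verts, w ∈ S) {v x y x' y' : V} (hv : v ∉ S)
    (h1 : Tri G S v x y) (h2 : Tri G S v x' y') (hxx : x ≠ x') (hxy : x ≠ y') (hyx : y ≠ x')
    (hyy : y ≠ y') :
    ({χ s(v, x), χ s(v, y)} : Multiset C) + {χ s(x', y')}
      = ({χ s(v, x'), χ s(v, y')} : Multiset C) + {χ s(x, y)} := by
  obtain ⟨a1, a2, a3, a4, a5⟩ := h1
  obtain ⟨b1, b2, b3, b4, b5⟩ := h2
  by_contra hne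
  obtain ⟨w, hw, hwS⟩ := hS ⟨v, x, y, x', y'⟩ (by
    refine ⟨?_, ?_, ?_, ?_⟩
    · intro e he
      simp only [Gad.F1, Multiset.insert_eq_cons, Multiset.mem_cons, Multiset.mem_singleton] at he
      rcases he with rfl | rfl | rfl
      · exact a1.symm
      · exact a2
      · exact b3
    · intro e he
      simp only [Gad.F2, Multiset.insert_eq_cons, Multiset.mem_cons, Multiset.mem_singleton] at he
      rcases he with rfl | rfl | rfl
      · exact a3
      · exact b1.symm
      · exact b2
    · have := a1.ne; have := a2.ne; have := a3.ne; have := b1.ne; have := b2.ne; have := b3.ne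
      simp only [Gad.verts, List.nodup_cons, List.mem_cons, not_or, List.not_mem_nil,
        List.nodup_nil]
      have := a1.ne.symm
      tauto
    · intro hh
      apply hne
      simp only [Gad.F1, Gad.F2, Multiset.insert_eq_cons, Multiset.map_cons,
        Multiset.map_singleton] at hh
      rw [Sym2.eq_swap (a := x) (b := v), Sym2.eq_swap (a := x') (b := v)] at hh
      ext c
      have := congrArg (Multiset.count c) hh
      simp only [Multiset.count_add, Multiset.insert_eq_cons, Multiset.count_cons,
          Multiset.count_singleton] at this ⊢
      omega)
  simp only [Gad.verts, List.mem_cons, List.not_mem_nil, or_false] at hw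
  rcases hw with rfl | rfl | rfl | rfl | rfl <;> tauto

lemma eqv2 (hS : ∀ g : Gad V, g.Good G χ → ∃ w ∈ g.verts, w ∈ S)
    (hT : ∀ (v : V) (T : Finset V), T.card ≤ 4 → ∃ x y, Tri G S v x y ∧ x ∉ T ∧ y ∉ T)
    {v x y x' y' : V} (hv : v ∉ S) (h1 : Tri G S v x y) (h2 : Tri G S v x' y') :
    ({χ s(v, x), χ s(v, y)} : Multiset C) + {χ s(x', y')}
      = ({χ s(v, x'), χ s(v, y')} : Multiset C) + {χ s(x, y)} := by
  obtain ⟨z, w, h3, hz, hw⟩ := hT v {x, y, x', y'} Finset.card_le_four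
  simp only [Finset.mem_insert, Finset.mem_singleton, not_or] at hz hw
  have e1 := eqv G χ S hS hv h1 h3 (by tauto) (by tauto) (by tauto) (by tauto)
  have e2 := eqv G χ S hS hv h2 h3 (by tauto) (by tauto) (by tauto) (by tauto)
  have : ({χ s(v, x), χ s(v, y)} : Multiset C) + {χ s(x', y')} + {χ s(z, w)}
      = ({χ s(v, x'), χ s(v, y')} : Multiset C) + {χ s(x, y)} + {χ s(z, w)} := by
    rw [add_right_comm, e1, add_right_comm _ _ ({χ s(z, w)} : Multiset C), e2, add_right_comm]
  exact add_right_cancel this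

lemma dich (hS : ∀ g : Gad V, g.Good G χ → ∃ w ∈ g.verts, w ∈ S)
    (hT : ∀ (v : V) (T : Finset V), T.card ≤ 4 → ∃ x y, Tri G S v x y ∧ x ∉ T ∧ y ∉ T)
    {v : V} (hv : v ∉ S) :
    (∃ c, ∀ x y, Tri G S v x y → χ s(x, y) = c) ∨
      ∃ t, ∀ x y, Tri G S v x y → ({χ s(v, x), χ s(v, y)} : Multiset C) = {t, χ s(x, y)} := by
  by_cases hm : ∃ c, ∀ x y, Tri G S v x y → χ s(x, y) = c
  · exact Or.inl hm
  right
  obtain ⟨x, y, h1, -, -⟩ := hT v ∅ (by simp)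
  push Not at hm
  obtain ⟨x', y', h2, hne⟩ := hm (χ s(x, y))
  have e := eqv2 G χ S hS hT hv h1 h2
  have hmem : χ s(x, y) ∈ ({χ s(v, x), χ s(v, y)} : Multiset C) + {χ s(x', y')} := by
    rw [e]; simp
  have : ∃ t, ({χ s(v, x), χ s(v, y)} : Multiset C) = {t, χ s(x, y)} := by
    simp only [Multiset.insert_eq_cons, Multiset.mem_add, Multiset.mem_cons,
      Multiset.mem_singleton] at hmem
    rcases hmem with (h | h) | h
    · exact ⟨χ s(v, y), by rw [h]; exact Multiset.cons_swap _ _ _⟩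
    · exact ⟨χ s(v, x), by rw [h]⟩
    · exact absurd h.symm hne
  obtain ⟨t, ht⟩ := this
  refine ⟨t, fun x2 y2 h3 => ?_⟩
  have e2 := eqv2 G χ S hS hT hv h1 h3
  rw [ht] at e2
  have : ({t, χ s(x2, y2)} : Multiset C) + {χ s(x, y)}
      = ({χ s(v, x2), χ s(v, y2)} : Multiset C) + {χ s(x, y)} := by
    rw [← e2]
    ext c
    simp only [Multiset.count_add, Multiset.insert_eq_cons, Multiset.count_cons,
          Multiset.count_singleton]
    omega
  exact (add_right_cancel this).symm

lemma exists_mono (hS : ∀ g : Gad V, g.Good G χ → ∃ w ∈ g.verts, w ∈ S)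
    (hT : ∀ (v : V) (T : Finset V), T.card ≤ 4 → ∃ x y, Tri G S v x y ∧ x ∉ T ∧ y ∉ T)
    {v : V} (hv : v ∉ S) :
    ∃ u c, ∀ x y, Tri G S u x y → χ s(x, y) = c := by
  rcases dich G χ S hS hT hv with ⟨c, hc⟩ | ⟨t, ht⟩
  · exact ⟨v, c, hc⟩
  by_cases hm : ∀ x y, Tri G S v x y → χ s(x, y) = t
  · exact ⟨v, t, hm⟩
  push Not at hm
  obtain ⟨x0, y0, h0, hne0⟩ := hm
  have : ∃ x y, Tri G S v x y ∧ χ s(x, y) ≠ t ∧ χ s(v, x) = t ∧ χ s(v, y) = χ s(x, y) := by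
    have e := ht x0 y0 h0
    have hmem : t ∈ ({χ s(v, x0), χ s(v, y0)} : Multiset C) := by rw [e]; simp
    simp only [Multiset.insert_eq_cons, Multiset.mem_cons, Multiset.mem_singleton] at hmem
    rcases hmem with h | h
    · refine ⟨x0, y0, h0, hne0, h.symm, ?_⟩
      rw [← h] at e
      simp only [Multiset.insert_eq_cons] at e
      simpa using (Multiset.cons_inj_right _).1 e
    · refine ⟨y0, x0, ⟨h0.2.1, h0.1, h0.2.2.1.symm, h0.2.2.2.2, h0.2.2.2.1⟩,
        by rwa [Sym2.eq_swap], h.symm, ?_⟩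
      rw [← h] at e
      have e' : ({t, χ s(v, x0)} : Multiset C) = {t, χ s(x0, y0)} := by
        rw [← e]; exact Multiset.cons_swap _ _ _
      simp only [Multiset.insert_eq_cons] at e'
      rw [Sym2.eq_swap (a := y0)]
      simpa using (Multiset.cons_inj_right _).1 e'
  obtain ⟨x, y, h, hne, h1, h2⟩ := this
  rcases dich G χ S hS hT h.2.2.2.2 with ⟨c, hc⟩ | ⟨t', ht'⟩
  · exact ⟨y, c, hc⟩
  exfalso
  have e := ht' v x ⟨h.2.1.symm, h.2.2.1.symm, h.1, hv, h.2.2.2.1⟩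
  have hmem : t ∈ ({χ s(y, v), χ s(y, x)} : Multiset C) := by rw [e, h1]; simp
  simp only [Multiset.insert_eq_cons, Multiset.mem_cons, Multiset.mem_singleton] at hmem
  rw [Sym2.eq_swap (a := y), Sym2.eq_swap (a := y), h2] at hmem
  rcases hmem with hh | hh <;> exact hne hh.symm

end struct

lemma verts_length (gs : List (Gad V)) : (gs.flatMap Gad.verts).length = 5 * gs.length := by
  induction gs with
  | nil => rfl
  | cons g gs ih => simp [List.flatMap_cons, ih, Gad.verts]; ring

lemma core {n r b : ℕ} (hr : 0 < r) (hb : 1 ≤ b) (G : SimpleGraph (Fin n))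
    (χ : Sym2 (Fin n) → Fin r)
    (hδ : ∀ v, n + 1024 * (r * b) ≤ 2 * (Finset.univ.filter (G.Adj v)).card) (hn : 1024 * (r * b) ≤ n)
    (hH : ∀ a t, Ham a t → (∀ e ∈ cyc a t, e ∈ G.edgeSet) →
      ∀ c, r * ((cyc a t).map χ).count c ≤ n + r * b) :
    ∃ (S : Finset (Fin n)) (u : Fin n) (c : Fin r), S.card ≤ 5 * (r * b) ∧
      ∀ x y, Tri G S u x y → χ s(x, y) = c := by
  have hm : 1 ≤ r * b := Nat.mul_pos hr hb
  generalize hmm : r * b = m at *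
  let P : ℕ → Prop := fun j => ∃ gs : List (Gad (Fin n)), gs.length = j ∧
    (∀ g ∈ gs, g.Good G χ) ∧ (gs.flatMap Gad.verts).Nodup
  have hP0 : P 0 := ⟨[], rfl, by simp, by simp⟩
  have hPm : ¬ P (m + 1) := by
    rintro ⟨gs, h1, h2, h3⟩
    have := few (r := r) (b := b) (δ := (n + 1024 * m + 1) / 2) (by omega) G χ
      (fun v => by have := hδ v; omega) (by rw [hmm]; exact hH) gs h2 h3 hr (by omega)
    omega
  obtain ⟨j, hj, hPj, hPj1⟩ : ∃ j ≤ m, P j ∧ ¬ P (j + 1) := by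
    by_contra hcon
    push Not at hcon
    have : ∀ j ≤ m + 1, P j := by
      intro j
      induction j with
      | zero => intro _; exact hP0
      | succ j ih => intro h; exact hcon j (by omega) (ih (by omega))
    exact hPm (this _ le_rfl)
  obtain ⟨gs, h1, h2, h3⟩ := hPj
  set S := (gs.flatMap Gad.verts).toFinset with hSdef
  have hScard : S.card ≤ 5 * m := by
    refine (List.toFinset_card_le _).trans ?_
    rw [verts_length]; omega
  have hS : ∀ g : Gad (Fin n), g.Good G χ → ∃ w ∈ g.verts, w ∈ S := by
    intro g hg
    by_contra hcon
    push Not at hcon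
    apply hPj1
    refine ⟨g :: gs, by simp [h1], ?_, ?_⟩
    · intro g' hg'
      rcases List.mem_cons.1 hg' with rfl | hh
      · exact hg
      · exact h2 _ hh
    · rw [List.flatMap_cons, List.nodup_append']
      refine ⟨hg.2.2.1, h3, ?_⟩
      intro w hw hw'
      exact hcon w hw (by rw [hSdef, List.mem_toFinset]; exact hw')
  have hT : ∀ (v : Fin n) (T : Finset (Fin n)), T.card ≤ 4 →
      ∃ x y, Tri G S v x y ∧ x ∉ T ∧ y ∉ T := by
    intro v T hTc
    have hU : (S ∪ T).card ≤ 5 * m + 4 := (Finset.card_union_le _ _).trans (by omega)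
    obtain ⟨x, hx, hxU⟩ := Finset.exists_mem_notMem_of_card_lt_card
      (s := S ∪ T) (t := Finset.univ.filter (G.Adj v)) (by have := hδ v; omega)
    have h_inter : 1024 * m ≤ (Finset.univ.filter (G.Adj v) ∩ Finset.univ.filter (G.Adj x)).card := by
      have e1 := Finset.card_union_add_card_inter (Finset.univ.filter (G.Adj v))
        (Finset.univ.filter (G.Adj x))
      have e2 := Finset.card_le_univ (Finset.univ.filter (G.Adj v) ∪ Finset.univ.filter (G.Adj x))
      rw [Fintype.card_fin] at e2
      have := hδ v; have := hδ x
      omega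
    obtain ⟨y, hy, hyU⟩ := Finset.exists_mem_notMem_of_card_lt_card
      (s := S ∪ T) (t := Finset.univ.filter (G.Adj v) ∩ Finset.univ.filter (G.Adj x)) (by omega)
    simp only [Finset.mem_inter, Finset.mem_filter, Finset.mem_univ, true_and,
      Finset.mem_union, not_or] at hx hy hxU hyU
    exact ⟨x, y, ⟨hx, hy.1, hy.2, hxU.1, hyU.1⟩, hxU.2, hyU.2⟩
  obtain ⟨v, -, hv⟩ := Finset.exists_mem_notMem_of_card_lt_card
    (s := S) (t := Finset.univ) (by rw [Finset.card_univ, Fintype.card_fin]; omega)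
  obtain ⟨u, c, huc⟩ := exists_mono G χ S hS hT hv
  exact ⟨S, u, c, hScard, huc⟩

lemma matching_card {C : Type*} (G : SimpleGraph V) (χ : Sym2 V → C) (S : Finset V) (u : V) (c : C)
    (h : ∀ x y, Tri G S u x y → χ s(x, y) = c) (M : Finset (Sym2 V))
    (hM1 : ∀ e ∈ M, e ∈ G.edgeSet)
    (hM2 : ∀ e ∈ M, ∀ f ∈ M, e ≠ f → ∀ v : V, ¬(v ∈ e ∧ v ∈ f))
    (hU : ∀ e ∈ M, ∀ w ∈ e, G.Adj u w) (hc : ∀ e ∈ M, χ e ≠ c) : M.card ≤ S.card := by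
  have hex : ∀ e ∈ M, ∃ w ∈ e, w ∈ S := by
    intro e he
    by_contra hcon
    push Not at hcon
    induction e using Sym2.ind with
    | _ x y =>
      exact hc _ he (h x y ⟨hU _ he x (by simp), hU _ he y (by simp), hM1 _ he,
        hcon x (by simp), hcon y (by simp)⟩)
  have : Nonempty V := ⟨u⟩
  choose! f hf1 hf2 using hex
  refine Finset.card_le_card_of_injOn f (fun e he => hf2 e he) ?_
  intro e he e' he' hee
  by_contra hne
  exact hM2 e he e' he' hne (f e) ⟨hf1 e he, by rw [hee]; exact hf1 e' he'⟩

end HB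

/-- structural proposition. Let `r ≥ 2`. For all sufficiently large
`n`, all integers `1 ≤ b ≤ 2⁻¹⁰ r⁻² n`, every graph `G` on `n` vertices with minimum
degree at least `(r+1)n/(2r)` and every `r`-colouring `χ` of its edges: if every
Hamilton cycle of `G` has colour bias at most `b` (each colour appears on at most
`n/r + b` edges), then there are `U ⊆ V(G)` with `|U| ≥ (r+1)n/(2r)` and a colour `c*`
such that every matching in `G[U]` avoiding colour `c*` has fewer than `2⁹ r b` edges. -/
theorem stmt_11 (r : ℕ) (hr : 2 ≤ r) :
    ∃ N : ℕ, ∀ n ≥ N, ∀ b : ℕ, 1 ≤ b → (b : ℝ) ≤ 2⁻¹ ^ 10 * ((r : ℝ))⁻¹ ^ 2 * n →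
      ∀ G : SimpleGraph (Fin n),
        (∀ v : Fin n, ((r : ℝ) + 1) / (2 * r) * n ≤ ((G.neighborSet v).ncard : ℝ)) →
        ∀ χ : Sym2 (Fin n) → Fin r,
          (∀ (u : Fin n) (H : G.Walk u u), H.IsHamiltonianCycle →
            ∀ c : Fin r,
              ((H.edges.filter fun e => decide (χ e = c)).length : ℝ) ≤ (n : ℝ) / r + b) →
          ∃ U : Finset (Fin n), ((r : ℝ) + 1) * n / (2 * r) ≤ (U.card : ℝ) ∧
            ∃ cstar : Fin r,
              ∀ M : Finset (Sym2 (Fin n)), MatchingIn M G →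
                (∀ e ∈ M, ∀ w ∈ e, w ∈ U) → (∀ e ∈ M, χ e ≠ cstar) →
                M.card < 2 ^ 9 * r * b := by
  refine ⟨0, fun n _ b hb hbn G hdeg χ hH => ?_⟩
  have hr0 : (0 : ℝ) < r := by exact_mod_cast (by omega : 0 < r)
  have hnb : 1024 * (r * (r * b)) ≤ n := by
    have : (1024 : ℝ) * (r * (r * b)) ≤ n := by
      have h1 : (1024 : ℝ) * (r * r) * b ≤ 1024 * (r * r) * (2⁻¹ ^ 10 * ((r : ℝ))⁻¹ ^ 2 * n) :=
        mul_le_mul_of_nonneg_left hbn (by positivity)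
      have h2 : (1024 : ℝ) * (r * r) * (2⁻¹ ^ 10 * ((r : ℝ))⁻¹ ^ 2 * n) = n := by
        field_simp; norm_num
      rw [h2] at h1
      linarith
    exact_mod_cast this
  have hcard : ∀ v, (G.neighborSet v).ncard = (Finset.univ.filter (G.Adj v)).card := by
    intro v
    rw [← Set.ncard_coe_finset]
    congr 1
    ext w; simp
  have hdeg' : ∀ v, n + 1024 * (r * b) ≤ 2 * (Finset.univ.filter (G.Adj v)).card := by
    intro v
    have h1 := hdeg v
    rw [hcard v, div_mul_eq_mul_div, div_le_iff₀ (by positivity)] at h1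
    have h2 : (r + 1) * n ≤ (Finset.univ.filter (G.Adj v)).card * (2 * r) := by exact_mod_cast h1
    refine le_of_mul_le_mul_left ?_ (by omega : 0 < r)
    nlinarith
  have hm : 1 ≤ r * b := Nat.mul_pos (by omega) hb
  have hn : 1024 * (r * b) ≤ n := by nlinarith
  obtain ⟨S, u, c, hS, huc⟩ := HB.core (r := r) (b := b) (by omega) hb G χ hdeg' hn (by
    intro a t hat he c
    have hl := hat.length
    obtain ⟨w, hw, hwe⟩ := HB.ham_walk hat (by omega) he
    have h1 := hH a w hw c
    have h2 : ((HB.cyc a t).map χ).count c = (w.edges.filter fun e => decide (χ e = c)).length := by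
      rw [← hwe, Multiset.map_coe, Multiset.coe_count, List.count, List.countP_map,
        List.countP_eq_length_filter]
      congr 1
    rw [← h2] at h1
    have h3 : (r : ℝ) * ((((HB.cyc a t).map χ).count c : ℕ) : ℝ) ≤ n + r * b := by
      calc _ ≤ (r : ℝ) * (n / r + b) := mul_le_mul_of_nonneg_left h1 hr0.le
        _ = _ := by field_simp
    exact_mod_cast h3)
  refine ⟨Finset.univ.filter (G.Adj u), ?_, c, ?_⟩
  · have := hdeg u
    rw [hcard u, div_mul_eq_mul_div] at this
    exact this
  · intro M hM hMU hMc
    have := HB.matching_card G χ S u c huc M hM.1 hM.2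
      (fun e he w hw => by simpa using hMU e he w hw) hMc
    have : M.card ≤ 5 * (r * b) := this.trans hS
    rw [mul_assoc]
    omega
end

section
/- Let r ≥ 2 be an integer, let n be sufficiently large, let b be an integer with 1 ≤ b ≤ 2^{-10} r^{-2} n, and set t = 2^5 r b, s = 8rb and α = (r+1)/(2r). Let G be a graph on n vertices with minimum degree δ(G) ≥ αn and let χ be an r-colouring of E(G) such that for each colour c ∈ {1,…,r} and each vertex v there exists a matching in G[N(v)] with at least 2^9 r b edges none of which has colour c. If there exists a colour c ∈ {1,…,r} such that |X_c| ≥ s/4 or |Y_c| ≥ s/4, then G contains a Hamilton cycle with colour bias at least b. -/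
open SimpleGraph
open scoped Classical

/-- `X_c`: the set of vertices `v` such that every matching in `G(v,c)` (the graph on
`N(v)` consisting of the edges of `G[N(v)]` not having both endpoints in `N_c(v)`) has
fewer than `8t` edges. -/
def Xset {n r : ℕ} (G : SimpleGraph (Fin n)) (χ : Sym2 (Fin n) → Fin r) (c : Fin r)
    (t : ℕ) : Set (Fin n) :=
  {v | ∀ M : Finset (Sym2 (Fin n)), MatchingIn M G →
    (∀ e ∈ M, ∀ w ∈ e, G.Adj v w) →
    (∀ e ∈ M, ¬ ∀ w ∈ e, χ s(v, w) = c) →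
    M.card < 8 * t}

/-- `Y_c`: the set of vertices `v` such that `B(v,c)` (the bipartite subgraph of
`G[N(v)]` between `N_c(v)` and `N(v) \ N_c(v)`) contains a matching with at least `4t`
edges, none of colour `c`. -/
def Yset {n r : ℕ} (G : SimpleGraph (Fin n)) (χ : Sym2 (Fin n) → Fin r) (c : Fin r)
    (t : ℕ) : Set (Fin n) :=
  {v | ∃ M : Finset (Sym2 (Fin n)), MatchingIn M G ∧
    (∀ e ∈ M, ∀ w ∈ e, G.Adj v w) ∧
    (∀ e ∈ M, ∃ a b : Fin n, e = s(a, b) ∧ χ s(v, a) = c ∧ χ s(v, b) ≠ c) ∧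
    (∀ e ∈ M, χ e ≠ c) ∧ 4 * t ≤ M.card}


/-! ### Lists as paths and cycles -/

/-- The list of edges of the path visiting the vertices of a list in order. -/
def pe {V : Type*} : List V → List (Sym2 V)
  | [] => []
  | [_] => []
  | a :: b :: t => s(a, b) :: pe (b :: t)

/-- The multiset of edges of the closed tour visiting the vertices of a list cyclically. -/
def ce {V : Type*} (l : List V) (h : l ≠ []) : Multiset (Sym2 V) :=
  (pe l : Multiset (Sym2 V)) + {s(l.getLast h, l.head h)}

lemma pe_append {V : Type*} : ∀ (A B : List V) (hA : A ≠ []) (hB : B ≠ []),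
    pe (A ++ B) = pe A ++ s(A.getLast hA, B.head hB) :: pe B
  | [a], b :: B, _, _ => by simp [pe]
  | a :: a' :: A, B, _, hB => by
    have := pe_append (a' :: A) B (by simp) hB
    simp only [List.cons_append] at this
    simp [pe, this]

lemma pe_reverse {V : Type*} (l : List V) : pe l.reverse = (pe l).reverse := by
  induction l with
  | nil => simp [pe]
  | cons a t ih =>
    cases t with
    | nil => simp [pe]
    | cons b t =>
      rw [List.reverse_cons, pe_append _ _ (by simp) (by simp), ih]
      simp [pe, Sym2.eq_swap]

lemma mem_of_mem_pe {V : Type*} : ∀ (l : List V) (e : Sym2 V), e ∈ pe l → ∀ w ∈ e, w ∈ l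
  | [], e, h => by simp [pe] at h
  | [_], e, h => by simp [pe] at h
  | a :: b :: t, e, h => by
    intro w hw
    simp only [pe, List.mem_cons] at h
    rcases h with h | h
    · subst h
      simp at hw
      rcases hw with h | h <;> simp [h]
    · exact List.mem_cons_of_mem _ (mem_of_mem_pe (b :: t) e h w hw)

lemma pe_nodup {V : Type*} : ∀ (l : List V), l.Nodup → (pe l).Nodup
  | [], _ => by simp [pe]
  | [_], _ => by simp [pe]
  | a :: b :: t, h => by
    have h2 := List.nodup_cons.1 h
    simp only [pe, List.nodup_cons]
    refine ⟨fun hm => h2.1 (mem_of_mem_pe _ _ hm a (by simp)), pe_nodup _ h2.2⟩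

lemma mem_pe_split {V : Type*} : ∀ (l : List V) (e : Sym2 V), e ∈ pe l →
    ∃ (A B : List V) (hA : A ≠ []) (hB : B ≠ []), l = A ++ B ∧ e = s(A.getLast hA, B.head hB)
  | [], e, h => by simp [pe] at h
  | [_], e, h => by simp [pe] at h
  | a :: b :: t, e, h => by
    simp only [pe, List.mem_cons] at h
    rcases h with h | h
    · exact ⟨[a], b :: t, by simp, by simp, by simp, by simp [h]⟩
    · obtain ⟨A, B, hA, hB, h1, h2⟩ := mem_pe_split (b :: t) e h
      refine ⟨a :: A, B, by simp, hB, by simp [h1], ?_⟩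
      rw [h2, List.getLast_cons hA]

lemma pe_length {V : Type*} : ∀ (l : List V), (pe l).length = l.length - 1
  | [] => by simp [pe]
  | [_] => by simp [pe]
  | a :: b :: t => by
    have := pe_length (b :: t)
    simp only [pe, List.length_cons] at *
    omega

lemma ce_append {V : Type*} (A B : List V) (hA : A ≠ []) (hB : B ≠ []) :
    ce (A ++ B) (by simp [hA]) = (pe A : Multiset (Sym2 V)) + (pe B : Multiset (Sym2 V))
      + {s(A.getLast hA, B.head hB)} + {s(B.getLast hB, A.head hA)} := by
  unfold ce
  rw [pe_append A B hA hB, List.getLast_append_of_ne_nil _ hB, List.head_append_of_ne_nil hA,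
    ← Multiset.coe_add, ← Multiset.cons_coe, ← Multiset.singleton_add]
  abel

lemma ce_rotate {V : Type*} (A B : List V) (hA : A ≠ []) (hB : B ≠ []) :
    ce (A ++ B) (by simp [hA]) = ce (B ++ A) (by simp [hA]) := by
  rw [ce_append A B hA hB, ce_append B A hB hA]
  abel

/-- Rotate a tour so that a given edge becomes its closing edge. -/
lemma rotate_to {V : Type*} (l : List V) (h : l ≠ []) (e : Sym2 V) (he : e ∈ ce l h) :
    ∃ (l' : List V) (h' : l' ≠ []), l'.Perm l ∧ ce l' h' = ce l h ∧
      e = s(l'.getLast h', l'.head h') := by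
  have he' := he
  unfold ce at he'
  rw [Multiset.mem_add] at he'
  rcases he' with h1 | h1
  · obtain ⟨A, B, hA, hB, h2, h3⟩ := mem_pe_split l e (by simpa using h1)
    subst h2
    refine ⟨B ++ A, by simp [hA], List.perm_append_comm, (ce_rotate A B hA hB).symm, ?_⟩
    rw [h3, List.getLast_append_of_ne_nil _ hA, List.head_append_of_ne_nil hB]
  · exact ⟨l, h, List.Perm.refl _, rfl, by simpa using h1⟩

/-- Counting lemma for the crossing argument. -/
lemma cross_count {V : Type*} (P Q : V → Bool) (R : Sym2 V → Bool) : ∀ (l : List V), l ≠ [] →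
    (∀ (A B : List V) (hA : A ≠ []) (hB : B ≠ []), l = A ++ B →
      P (B.head hB) → Q (A.getLast hA) → R s(A.getLast hA, B.head hB)) →
    l.tail.countP P + l.dropLast.countP Q + 1 ≤ l.length + (pe l).countP R
  | [], h, _ => by simp at h
  | [a], _, _ => by simp
  | a :: b :: t, _, H => by
    have ih := cross_count P Q R (b :: t) (by simp) (by
      intro A B hA hB h1 h2 h3
      have := H (a :: A) B (by simp) hB (by simp [h1]) h2
        (by rw [List.getLast_cons hA]; exact h3)
      rwa [List.getLast_cons hA] at this)
    have h0 := H [a] (b :: t) (by simp) (by simp) (by simp)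
    simp only [List.getLast_singleton, List.head_cons] at h0
    simp only [List.tail_cons, List.dropLast_cons_cons, List.countP_cons, pe, List.length_cons]
      at *
    by_cases h1 : P b = true <;> by_cases h2 : Q a = true <;> by_cases h3 : R s(a, b) = true <;>
      simp_all <;> omega

lemma countP_nodup_eq {V : Type*} [DecidableEq V] (l : List V) (hl : l.Nodup) (p : V → Prop) :
    l.countP (fun w => decide (p w)) = (l.toFinset.filter p).card := by
  rw [List.countP_eq_length_filter, ← List.toFinset_card_of_nodup (hl.filter _)]
  congr 1
  ext w
  simp

/-- A Pósa-type lemma: with large minimum degree there is a Hamilton cycle through a given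
set `M` of edges, provided some tour of the complete graph contains `M`. -/
lemma posa {V : Type*} [DecidableEq V] (G : SimpleGraph V) (S : Finset V) (M : Finset (Sym2 V))
    (hdeg : ∀ x ∈ S, S.card + M.card ≤ 2 * (S.filter (G.Adj x)).card)
    (hMG : ∀ e ∈ M, e ∈ G.edgeSet) :
    ∀ (k : ℕ) (l : List V) (h : l ≠ []), l.Nodup → l.toFinset = S → (∀ e ∈ M, e ∈ ce l h) →
      (ce l h).countP (fun e => e ∉ G.edgeSet) = k →
      ∃ (l' : List V) (h' : l' ≠ []), l'.Nodup ∧ l'.toFinset = S ∧ (∀ e ∈ M, e ∈ ce l' h') ∧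
        ∀ e ∈ ce l' h', e ∈ G.edgeSet := by
  intro k
  induction k using Nat.strong_induction_on with
  | _ k ih =>
  intro l h hnd hS hM hk
  by_cases hall : ∀ e ∈ ce l h, e ∈ G.edgeSet
  · exact ⟨l, h, hnd, hS, hM, hall⟩
  push Not at hall
  obtain ⟨e, he, hbad⟩ := hall
  obtain ⟨l₁, h₁, hp, hce, heq⟩ := rotate_to l h e he
  have hnd₁ : l₁.Nodup := hp.nodup_iff.2 hnd
  have hS₁ : l₁.toFinset = S := by rw [← hS]; exact List.toFinset_eq_of_perm _ _ hp
  set x := l₁.head h₁ with hx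
  set y := l₁.getLast h₁ with hy
  have hxS : x ∈ S := by rw [← hS₁]; simp [hx]
  have hyS : y ∈ S := by rw [← hS₁]; simp [hy]
  have hex : ∃ (A B : List V) (hA : A ≠ []) (hB : B ≠ []), l₁ = A ++ B ∧
      G.Adj x (B.head hB) ∧ G.Adj y (A.getLast hA) ∧ s(A.getLast hA, B.head hB) ∉ M := by
    by_contra hno
    push Not at hno
    have hcc := cross_count (fun w => decide (G.Adj x w)) (fun w => decide (G.Adj y w))
      (fun e => decide (e ∈ M)) l₁ h₁ (by
        intro A B hA hB h1 h2 h3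
        simp only [decide_eq_true_eq] at *
        exact hno A B hA hB h1 h2 h3)
    have e1 : l₁.tail.countP (fun w => decide (G.Adj x w)) =
        l₁.countP (fun w => decide (G.Adj x w)) := by
      conv_rhs => rw [← List.cons_head_tail h₁]
      rw [List.countP_cons]
      simp [← hx]
    have e2 : l₁.dropLast.countP (fun w => decide (G.Adj y w)) =
        l₁.countP (fun w => decide (G.Adj y w)) := by
      conv_rhs => rw [← List.dropLast_append_getLast h₁]
      rw [List.countP_append]
      simp [← hy]
    rw [e1, e2, countP_nodup_eq _ hnd₁, countP_nodup_eq _ hnd₁, hS₁] at hcc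
    have e3 : l₁.length = S.card := by rw [← hS₁, List.toFinset_card_of_nodup hnd₁]
    have e4 : (pe l₁).countP (fun e => decide (e ∈ M)) ≤ M.card := by
      rw [List.countP_eq_length_filter,
        ← List.toFinset_card_of_nodup ((pe_nodup _ hnd₁).filter _)]
      exact Finset.card_le_card (by intro e; simp)
    have d1 := hdeg x hxS
    have d2 := hdeg y hyS
    omega
  obtain ⟨A, B, hA, hB, hAB, hxb, hya, hnM⟩ := hex
  have hold := ce_append A B hA hB
  have hBr : B.reverse ≠ [] := by simpa using hB
  have hnew := ce_append A B.reverse hA hBr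
  have hcel : ce (A ++ B) (by simp [hA]) = ce l h := by
    rw [← hce]; congr 1; exact hAB.symm
  have hxA : A.head hA = x := by
    rw [hx]; simp only [hAB]; rw [List.head_append_of_ne_nil hA]
  have hyB : B.getLast hB = y := by
    rw [hy]; simp only [hAB]; rw [List.getLast_append_of_ne_nil _ hB]
  rw [hcel, hxA, hyB] at hold
  have hpr : (pe B.reverse : Multiset (Sym2 V)) = pe B := by
    rw [pe_reverse]; exact Multiset.coe_reverse _
  rw [hpr, List.head_reverse, List.getLast_reverse, hxA, hyB] at hnew
  refine ih _ ?_ (A ++ B.reverse) (by simp [hA]) ?_ ?_ ?_ rfl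
  · rw [← hk, hold, hnew]
    have g1 : s(A.getLast hA, y) ∈ G.edgeSet := by
      rw [SimpleGraph.mem_edgeSet]; exact hya.symm
    have g2 : s(B.head hB, x) ∈ G.edgeSet := by
      rw [SimpleGraph.mem_edgeSet]; exact hxb.symm
    have g3 : s(y, x) ∉ G.edgeSet := heq ▸ hbad
    simp only [Multiset.countP_add]
    have q1 : Multiset.countP (fun e => e ∉ G.edgeSet) {s(A.getLast hA, y)} = 0 := by
      rw [Multiset.countP_eq_zero]; intro a ha; rw [Multiset.mem_singleton] at ha
      subst ha; exact not_not.2 g1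
    have q2 : Multiset.countP (fun e => e ∉ G.edgeSet) {s(B.head hB, x)} = 0 := by
      rw [Multiset.countP_eq_zero]; intro a ha; rw [Multiset.mem_singleton] at ha
      subst ha; exact not_not.2 g2
    have q3 : 0 < Multiset.countP (fun e => e ∉ G.edgeSet) {s(y, x)} := by
      rw [Multiset.countP_pos]; exact ⟨_, Multiset.mem_singleton_self _, g3⟩
    omega
  · rw [hAB] at hnd₁
    exact ((List.Perm.append_left A (List.reverse_perm B)).nodup_iff).2 hnd₁
  · rw [← hS₁, hAB]
    exact List.toFinset_eq_of_perm _ _ (List.Perm.append_left A (List.reverse_perm B))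
  · intro f hf
    have := hM f hf
    rw [hold] at this
    rw [hnew]
    simp only [Multiset.mem_add, Multiset.mem_singleton] at this ⊢
    rcases this with ((h | h) | h) | h
    · simp [h]
    · simp [h]
    · exact absurd (h ▸ hf) hnM
    · exact absurd (hMG f hf) (by rw [h, ← heq]; exact hbad)

/-! ### From tours to Hamilton cycles -/

lemma walk_of_list {V : Type*} (G : SimpleGraph V) : ∀ (l : List V) (h : l ≠ []),
    (∀ e ∈ pe l, e ∈ G.edgeSet) →
    ∃ p : G.Walk (l.head h) (l.getLast h), p.support = l ∧ p.edges = pe l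
  | [a], _, _ => ⟨SimpleGraph.Walk.nil, by simp, by simp [pe]⟩
  | a :: b :: t, _, H => by
    obtain ⟨p, h1, h2⟩ := walk_of_list G (b :: t) (by simp)
      (fun e he => H e (by simp [pe, he]))
    have hab : G.Adj a b := by
      rw [← SimpleGraph.mem_edgeSet]; exact H _ (by simp [pe])
    exact ⟨SimpleGraph.Walk.cons hab p, congrArg (a :: ·) h1, congrArg (s(a, b) :: ·) h2⟩

lemma closing_not_mem {V : Type*} (l : List V) (h : l ≠ []) (hnd : l.Nodup)
    (h3 : 3 ≤ l.length) : s(l.getLast h, l.head h) ∉ pe l := by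
  match l, h, hnd, h3 with
  | a :: b :: c :: t, h, hnd, _ =>
    intro hm
    have hla : (a :: b :: c :: t).getLast h = (c :: t).getLast (by simp) := by
      simp [List.getLast_cons]
    rw [hla] at hm
    have hmem : (c :: t).getLast (by simp) ∈ (c :: t) := List.getLast_mem _
    set z := (c :: t).getLast (by simp) with hz
    have hnd2 := List.nodup_cons.1 hnd
    have hnd3 := List.nodup_cons.1 hnd2.2
    simp only [List.head_cons] at hm
    rw [pe, List.mem_cons] at hm
    rcases hm with hm | hm
    · rw [Sym2.eq_iff] at hm
      rcases hm with ⟨h1, _⟩ | ⟨h1, _⟩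
      · exact hnd2.1 (List.mem_cons_of_mem _ (h1 ▸ hmem))
      · exact hnd3.1 (h1 ▸ hmem)
    · exact hnd2.1 (mem_of_mem_pe _ _ hm a (by simp))

lemma ham_of_list {n : ℕ} (G : SimpleGraph (Fin n)) (l : List (Fin n)) (h : l ≠ [])
    (hnd : l.Nodup) (hall : l.toFinset = Finset.univ) (hn : 3 ≤ n)
    (hE : ∀ e ∈ ce l h, e ∈ G.edgeSet) :
    ∃ (u : Fin n) (H : G.Walk u u), H.IsHamiltonianCycle ∧
      (H.edges : Multiset (Sym2 (Fin n))) = ce l h := by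
  obtain ⟨p, h1, h2⟩ := walk_of_list G l h (fun e he => hE e (by simp [ce, he]))
  have hadj : G.Adj (l.getLast h) (l.head h) := by
    rw [← SimpleGraph.mem_edgeSet]; exact hE _ (by simp [ce])
  have hlen : l.length = n := by
    rw [← List.toFinset_card_of_nodup hnd, hall]; simp
  have hp : p.IsPath := by
    rw [SimpleGraph.Walk.isPath_def, h1]; exact hnd
  refine ⟨l.getLast h, SimpleGraph.Walk.cons hadj p, ?_, ?_⟩
  · rw [SimpleGraph.Walk.isHamiltonianCycle_iff_isCycle_and_support_count_tail_eq_one]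
    refine ⟨(SimpleGraph.Walk.cons_isCycle_iff _ _).2 ⟨hp, ?_⟩, ?_⟩
    · rw [h2]; exact closing_not_mem l h hnd (by omega)
    · intro a
      simp only [SimpleGraph.Walk.support_cons, List.tail_cons, h1]
      refine List.count_eq_one_of_mem hnd ?_
      have : a ∈ l.toFinset := by rw [hall]; simp
      simpa using this
  · simp only [SimpleGraph.Walk.edges_cons, h2, ce]
    rw [← Multiset.cons_coe, ← Multiset.singleton_add, add_comm]

/-! ### Gadgets -/

/-- A gadget: a centre `u` and two edges `xy`, `zw` into either of which `u` can be inserted. -/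
structure Gad (V : Type*) where
  u : V
  x : V
  y : V
  z : V
  w : V

/-- The vertices of a gadget. -/
def Gad.verts {V : Type*} (g : Gad V) : List V := [g.u, g.x, g.y, g.z, g.w]

/-- The gadget lives in `G`. -/
def Gad.InG {V : Type*} (g : Gad V) (G : SimpleGraph V) : Prop :=
  G.Adj g.u g.x ∧ G.Adj g.u g.y ∧ G.Adj g.x g.y ∧ G.Adj g.u g.z ∧ G.Adj g.u g.w ∧ G.Adj g.z g.w

/-- Gain in weight from inserting `u` into `xy` (for `true`) or `zw` (for `false`). -/
def Gad.gain {V : Type*} (g : Gad V) (φ : Sym2 V → ℤ) : Bool → ℤ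
  | true => φ s(g.u, g.x) + φ s(g.u, g.y) - φ s(g.x, g.y)
  | false => φ s(g.u, g.z) + φ s(g.u, g.w) - φ s(g.z, g.w)

/-- Insert a vertex into an edge of a tour. -/
lemma insert_one {V : Type*} [DecidableEq V] (G : SimpleGraph V) (l : List V) (h : l ≠ []) (u x y : V)
    (hxy : s(x, y) ∈ ce l h) (hux : G.Adj u x) (huy : G.Adj u y) (hu : u ∉ l)
    (hnd : l.Nodup) (hE : ∀ e ∈ ce l h, e ∈ G.edgeSet) :
    ∃ (l' : List V) (h' : l' ≠ []), l'.Nodup ∧ l'.toFinset = insert u l.toFinset ∧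
      (∀ e ∈ ce l' h', e ∈ G.edgeSet) ∧
      (∀ e ∈ ce l h, e ≠ s(x, y) → e ∈ ce l' h') ∧
      ∀ φ : Sym2 V → ℤ, ((ce l' h').map φ).sum =
        ((ce l h).map φ).sum + (φ s(u, x) + φ s(u, y) - φ s(x, y)) := by
  obtain ⟨l₁, h₁, hp, hce, heq⟩ := rotate_to l h _ hxy
  have hnew := ce_append [u] l₁ (by simp) h₁
  have hold : ce l h = (pe l₁ : Multiset (Sym2 V)) + {s(x, y)} := by
    rw [← hce, heq]; rfl
  have hnew' : ce ([u] ++ l₁) (by simp) = (pe l₁ : Multiset (Sym2 V)) + {s(u, x)} + {s(u, y)} := by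
    rw [hnew]
    simp only [pe, List.getLast_singleton, List.head_cons]
    rw [Sym2.eq_iff] at heq
    rcases heq with ⟨h1, h2⟩ | ⟨h1, h2⟩
    · rw [← h1, ← h2, Sym2.eq_swap (a := x) (b := u)]
      simp only [Multiset.coe_nil, zero_add]
      abel
    · rw [← h1, ← h2, Sym2.eq_swap (a := y) (b := u)]
      simp only [Multiset.coe_nil, zero_add]
  refine ⟨[u] ++ l₁, by simp, ?_, ?_, ?_, ?_, ?_⟩
  · simp only [List.cons_append, List.nil_append, List.nodup_cons]
    exact ⟨fun hm => hu (hp.mem_iff.1 hm), hp.nodup_iff.2 hnd⟩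
  · rw [← List.toFinset_eq_of_perm _ _ hp]; simp
  · intro e he
    rw [hnew'] at he
    simp only [Multiset.mem_add, Multiset.mem_singleton] at he
    rcases he with (he | he) | he
    · exact hE e (by rw [hold]; simp only [Multiset.mem_add]; exact Or.inl he)
    · rw [he]; exact hux
    · rw [he]; exact huy
  · intro e he hne
    rw [hold] at he
    rw [hnew']
    simp only [Multiset.mem_add, Multiset.mem_singleton] at he ⊢
    rcases he with he | he
    · exact Or.inl (Or.inl he)
    · exact absurd he hne
  · intro φ
    rw [hnew', hold]
    simp only [Multiset.map_add, Multiset.sum_add, Multiset.map_singleton, Multiset.sum_singleton]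
    ring

/-- Insert all centres of a list of gadgets, according to a choice function. -/
lemma insert_all {V : Type*} [DecidableEq V] (G : SimpleGraph V) (ch : Gad V → Bool) : ∀ (gs : List (Gad V)),
    (gs.flatMap Gad.verts).Nodup → (∀ g ∈ gs, g.InG G) →
    ∀ (l : List V) (h : l ≠ []), l.Nodup → (∀ e ∈ ce l h, e ∈ G.edgeSet) →
    (∀ g ∈ gs, g.u ∉ l ∧ s(g.x, g.y) ∈ ce l h ∧ s(g.z, g.w) ∈ ce l h) →
    ∃ (l' : List V) (h' : l' ≠ []), l'.Nodup ∧
      l'.toFinset = l.toFinset ∪ (gs.map Gad.u).toFinset ∧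
      (∀ e ∈ ce l' h', e ∈ G.edgeSet) ∧
      ∀ φ : Sym2 V → ℤ, ((ce l' h').map φ).sum =
        ((ce l h).map φ).sum + (gs.map (fun g => g.gain φ (ch g))).sum := by
  intro gs
  induction gs with
  | nil =>
    intro _ _ l h hnd hE _
    exact ⟨l, h, hnd, by simp, hE, by simp⟩
  | cons g gs ih =>
    intro hgnd hin l h hnd hE hg
    obtain ⟨hu, hxy, hzw⟩ := hg g (by simp)
    obtain ⟨i1, i2, i3, i4, i5, i6⟩ := hin g (by simp)
    rw [List.flatMap_cons, List.nodup_append] at hgnd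
    obtain ⟨_, hgs, hdis⟩ := hgnd
    have hv : ∀ g' ∈ gs, ∀ v ∈ g'.verts, v ∉ g.verts := by
      intro g' hg' v hv hv'
      exact hdis v hv' v (List.mem_flatMap.2 ⟨g', hg', hv⟩) rfl
    -- insert `g.u` into the chosen edge `pq`
    have key : ∃ p q, (p ∈ g.verts) ∧ s(p, q) ∈ ce l h ∧ G.Adj g.u p ∧ G.Adj g.u q ∧
        ∀ φ : Sym2 V → ℤ, g.gain φ (ch g) = φ s(g.u, p) + φ s(g.u, q) - φ s(p, q) := by
      cases hc : ch g with
      | true => exact ⟨g.x, g.y, by simp [Gad.verts], hxy, i1, i2, fun φ => rfl⟩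
      | false => exact ⟨g.z, g.w, by simp [Gad.verts], hzw, i4, i5, fun φ => rfl⟩
    obtain ⟨p, q, hpv, hpq, hp, hq, hgain⟩ := key
    obtain ⟨l₁, h₁, n1, n2, n3, n4, n5⟩ := insert_one G l h g.u p q hpq hp hq hu hnd hE
    have hne : ∀ g' ∈ gs, s(g'.x, g'.y) ≠ s(p, q) ∧ s(g'.z, g'.w) ≠ s(p, q) := by
      intro g' hg'
      constructor
      · intro he
        have : p ∈ s(g'.x, g'.y) := by rw [he]; simp
        rw [Sym2.mem_iff] at this
        exact hv g' hg' p (by rcases this with h | h <;> simp [Gad.verts, h]) hpv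
      · intro he
        have : p ∈ s(g'.z, g'.w) := by rw [he]; simp
        rw [Sym2.mem_iff] at this
        exact hv g' hg' p (by rcases this with h | h <;> simp [Gad.verts, h]) hpv
    obtain ⟨l', h', m1, m2, m3, m4⟩ := ih hgs (fun g' hg' => hin g' (by simp [hg'])) l₁ h₁ n1 n3 (by
      intro g' hg'
      obtain ⟨a1, a2, a3⟩ := hg g' (by simp [hg'])
      refine ⟨?_, n4 _ a2 (hne g' hg').1, n4 _ a3 (hne g' hg').2⟩
      intro hm
      rw [← List.mem_toFinset, n2, Finset.mem_insert] at hm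
      rcases hm with hm | hm
      · exact hv g' hg' g'.u (by simp [Gad.verts]) (by rw [hm]; simp [Gad.verts])
      · exact a1 (by simpa using hm))
    refine ⟨l', h', m1, ?_, m3, ?_⟩
    · rw [m2, n2]; ext v; simp
    · intro φ
      rw [m4, n5, List.map_cons, List.sum_cons, hgain]
      ring

/-- Pick an edge of a matching avoiding a small set of vertices. -/
lemma pick_edge {V : Type*} (G : SimpleGraph V) (M : Finset (Sym2 V)) (hM : MatchingIn M G)
    (F : Finset V) (hF : F.card < M.card) : ∃ e ∈ M, ∀ w ∈ e, w ∉ F := by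
  by_contra hno
  push Not at hno
  have hno' : ∀ e, ∃ w, e ∈ M → w ∈ e ∧ w ∈ F := by
    intro e
    by_cases he : e ∈ M
    · obtain ⟨w, h1, h2⟩ := hno e he
      exact ⟨w, fun _ => ⟨h1, h2⟩⟩
    · induction e with
      | _ x y => exact ⟨x, fun h => absurd h he⟩
  choose f hf using hno'
  have hf1 := fun e he => (hf e he).1
  have hf2 := fun e he => (hf e he).2
  have : M.card ≤ F.card := Finset.card_le_card_of_injOn f (fun e he => hf2 e he) (by
    intro e he e' he' heq
    by_contra hne
    exact hM.2 e he e' he' hne (f e) ⟨hf1 e he, heq ▸ hf1 e' he'⟩)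
  omega

/-- Indicator weight of a set of colours. -/
def ind {V : Type*} {r : ℕ} (χ : Sym2 V → Fin r) (D : Finset (Fin r)) (e : Sym2 V) : ℤ :=
  if χ e ∈ D then 1 else 0

/-- A good gadget: it lives in `G`, has distinct vertices, and switching changes some colour. -/
def Gad.Good {V : Type*} {r : ℕ} (g : Gad V) (G : SimpleGraph V) (χ : Sym2 V → Fin r) : Prop :=
  g.InG G ∧ g.verts.Nodup ∧ ∃ d, g.gain (ind χ {d}) true ≠ g.gain (ind χ {d}) false

lemma gad_X {n r : ℕ} (G : SimpleGraph (Fin n)) (χ : Sym2 (Fin n) → Fin r) (b : ℕ)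
    (hM : ∀ (c : Fin r) (v : Fin n), ∃ M : Finset (Sym2 (Fin n)), MatchingIn M G ∧
      (∀ e ∈ M, ∀ w ∈ e, G.Adj v w) ∧ (∀ e ∈ M, χ e ≠ c) ∧ 2 ^ 9 * r * b ≤ M.card)
    (hrb : 1 ≤ r * b)
    (c : Fin r) (v : Fin n) (hv : v ∈ Xset G χ c (2 ^ 5 * r * b)) (F : Finset (Fin n))
    (hF : F.card ≤ 12 * (r * b)) (hvF : v ∉ F) :
    ∃ g : Gad (Fin n), g.Good G χ ∧ ∀ w ∈ g.verts, w ∉ F := by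
  have main : ∀ (d : Fin r) (F' : Finset (Fin n)), F'.card ≤ 20 * (r * b) →
      ∃ x y, G.Adj x y ∧ G.Adj v x ∧ G.Adj v y ∧ χ s(v, x) = c ∧ χ s(v, y) = c ∧
        χ s(x, y) ≠ d ∧ x ∉ F' ∧ y ∉ F' := by
    intro d F' hF'
    obtain ⟨M, h1, h2, h3, h4⟩ := hM d v
    have h5 := hv (M.filter (fun e => ¬ ∀ w ∈ e, χ s(v, w) = c))
      ⟨fun e he => h1.1 e (Finset.mem_filter.1 he).1, fun e he f hf =>
        h1.2 e (Finset.mem_filter.1 he).1 f (Finset.mem_filter.1 hf).1⟩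
      (fun e he => h2 e (Finset.mem_filter.1 he).1)
      (fun e he => (Finset.mem_filter.1 he).2)
    have h6 := Finset.card_filter_add_card_filter_not (s := M) (fun e => ∀ w ∈ e, χ s(v, w) = c)
    obtain ⟨e, he, heF⟩ := pick_edge G (M.filter (fun e => ∀ w ∈ e, χ s(v, w) = c))
      ⟨fun e he => h1.1 e (Finset.mem_filter.1 he).1, fun e he f hf =>
        h1.2 e (Finset.mem_filter.1 he).1 f (Finset.mem_filter.1 hf).1⟩ F' (by
        rw [mul_assoc] at h4 h5
        omega)
    obtain ⟨he1, he2⟩ := Finset.mem_filter.1 he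
    induction e with
    | _ x y =>
    exact ⟨x, y, h1.1 _ he1, h2 _ he1 x (by simp), h2 _ he1 y (by simp), he2 x (by simp),
      he2 y (by simp), h3 _ he1, heF x (by simp), heF y (by simp)⟩
  obtain ⟨x, y, a1, a2, a3, a4, a5, a6, a7, a8⟩ := main c F (by omega)
  obtain ⟨z, w, b1, b2, b3, b4, b5, b6, b7, b8⟩ := main (χ s(x, y)) (insert x (insert y F)) (by
    have := Finset.card_insert_le x (insert y F)
    have := Finset.card_insert_le y F
    omega)
  simp only [Finset.mem_insert, not_or] at b7 b8
  refine ⟨⟨v, x, y, z, w⟩, ⟨⟨a2, a3, a1, b2, b3, b1⟩, ?_, χ s(x, y), ?_⟩, ?_⟩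
  · have := a1.ne; have := a2.ne; have := a3.ne; have := b1.ne; have := b2.ne; have := b3.ne
    simp only [Gad.verts, List.nodup_cons, List.mem_cons, List.not_mem_nil, or_false, not_or,
      not_false_eq_true, List.nodup_nil, and_true]
    grind
  · simp only [Gad.gain, ind, Finset.mem_singleton, a4, a5, b4, b5, b6, if_true, if_false]
    omega
  · simp [Gad.verts, hvF, a7, a8, b7, b8]

lemma gad_Y {n r : ℕ} (G : SimpleGraph (Fin n)) (χ : Sym2 (Fin n) → Fin r) (b : ℕ)
    (hM : ∀ (c : Fin r) (v : Fin n), ∃ M : Finset (Sym2 (Fin n)), MatchingIn M G ∧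
      (∀ e ∈ M, ∀ w ∈ e, G.Adj v w) ∧ (∀ e ∈ M, χ e ≠ c) ∧ 2 ^ 9 * r * b ≤ M.card)
    (hrb : 1 ≤ r * b)
    (c : Fin r) (v : Fin n) (hv : v ∈ Yset G χ c (2 ^ 5 * r * b)) (F : Finset (Fin n))
    (hF : F.card ≤ 12 * (r * b)) (hvF : v ∉ F) :
    ∃ g : Gad (Fin n), g.Good G χ ∧ ∀ w ∈ g.verts, w ∉ F := by
  obtain ⟨M, h1, h2, h3, h4, h5⟩ := hv
  obtain ⟨e, he, heF⟩ := pick_edge G M h1 F (by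
    rw [mul_assoc] at h5
    omega)
  obtain ⟨p, q, hpq, hp, hq⟩ := h3 e he
  subst hpq
  have a1 : G.Adj p q := h1.1 _ he
  have a2 : G.Adj v p := h2 _ he p (by simp)
  have a3 : G.Adj v q := h2 _ he q (by simp)
  have a4 := h4 _ he
  have a5 : p ∉ F := heF p (by simp)
  have a6 : q ∉ F := heF q (by simp)
  obtain ⟨M', k1, k2, k3, k4⟩ := hM c q
  obtain ⟨e', he', heF'⟩ := pick_edge G M' k1 (insert v (insert p F)) (by
    have := Finset.card_insert_le v (insert p F)
    have := Finset.card_insert_le p F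
    rw [mul_assoc] at k4
    omega)
  induction e' with
  | _ z w =>
  have b1 : G.Adj z w := k1.1 _ he'
  have b2 : G.Adj q z := k2 _ he' z (by simp)
  have b3 : G.Adj q w := k2 _ he' w (by simp)
  have b4 := k3 _ he'
  have b7 := heF' z (by simp)
  have b8 := heF' w (by simp)
  simp only [Finset.mem_insert, not_or] at b7 b8
  refine ⟨⟨q, v, p, z, w⟩, ⟨⟨a3.symm, a1.symm, a2, b2, b3, b1⟩, ?_, c, ?_⟩, ?_⟩
  · have := a1.ne; have := a2.ne; have := a3.ne; have := b1.ne; have := b2.ne; have := b3.ne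
    simp only [Gad.verts, List.nodup_cons, List.mem_cons, List.not_mem_nil, or_false, not_or,
      not_false_eq_true, List.nodup_nil, and_true]
    grind
  · rw [Sym2.eq_swap] at hq a4
    simp only [Gad.gain, ind, Finset.mem_singleton, hp, hq, a4, b4, if_true, if_false]
    split_ifs <;> omega
  · simp [Gad.verts, hvF, a5, a6, b7, b8]

/-- Greedily choose many disjoint gadgets. -/
lemma greedy {n r m : ℕ} (G : SimpleGraph (Fin n)) (χ : Sym2 (Fin n) → Fin r)
    (X : Finset (Fin n)) (hX : X.card = 2 * m)
    (H : ∀ v ∈ X, ∀ F : Finset (Fin n), F.card ≤ 12 * m → v ∉ F →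
      ∃ g : Gad (Fin n), g.Good G χ ∧ ∀ w ∈ g.verts, w ∉ F) :
    ∀ T : Finset (Fin n), T ⊆ X → ∃ gs : List (Gad (Fin n)), gs.length = T.card ∧
      (gs.flatMap Gad.verts).Nodup ∧ (∀ g ∈ gs, g.Good G χ) ∧
      ∀ w ∈ gs.flatMap Gad.verts, w ∉ X \ T := by
  intro T
  induction T using Finset.induction_on with
  | empty => exact fun _ => ⟨[], by simp, by simp, by simp, by simp⟩
  | insert v T hvT ih =>
    intro hT
    have hvX : v ∈ X := hT (by simp)
    have hTX : T ⊆ X := fun a ha => hT (by simp [ha])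
    obtain ⟨gs, g1, g2, g3, g4⟩ := ih hTX
    have hlen : (gs.flatMap Gad.verts).length = 5 * gs.length := by
      clear g1 g2 g3 g4
      induction gs with
      | nil => simp
      | cons g gs ih => simp [List.flatMap_cons, Gad.verts, ih] at *; omega
    obtain ⟨g, hg, hgF⟩ := H v hvX ((gs.flatMap Gad.verts).toFinset ∪ (X \ insert v T)) (by
      have q1 := Finset.card_union_le (gs.flatMap Gad.verts).toFinset (X \ insert v T)
      have q2 := List.toFinset_card_le (gs.flatMap Gad.verts)
      have q3 : (X \ insert v T).card ≤ X.card := Finset.card_le_card Finset.sdiff_subset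
      have q4 : T.card ≤ X.card := Finset.card_le_card hTX
      omega) (by
      intro hm
      rw [Finset.mem_union] at hm
      rcases hm with hm | hm
      · exact g4 v (by simpa using hm) (by simp [hvX, hvT])
      · simp at hm)
    refine ⟨g :: gs, by simp [g1, Finset.card_insert_of_notMem hvT], ?_, ?_, ?_⟩
    · rw [List.flatMap_cons, List.nodup_append]
      refine ⟨hg.2.1, g2, ?_⟩
      intro a ha b hb hab
      subst hab
      exact hgF a ha (Finset.mem_union_left _ (by simpa using hb))
    · intro g' hg'
      rcases List.mem_cons.1 hg' with h | h
      · exact h ▸ hg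
      · exact g3 g' h
    · intro w hw
      rw [List.flatMap_cons, List.mem_append] at hw
      rcases hw with hw | hw
      · exact fun hm => hgF w hw (Finset.mem_union_right _ hm)
      · intro hm
        refine g4 w hw ?_
        simp only [Finset.mem_sdiff, Finset.mem_insert, not_or] at hm ⊢
        exact ⟨hm.1, hm.2.2⟩

/-- The swing of a gadget with respect to a colour set. -/
def Gad.swing {V : Type*} {r : ℕ} (g : Gad V) (χ : Sym2 V → Fin r) (D : Finset (Fin r)) : ℤ :=
  g.gain (ind χ D) true - g.gain (ind χ D) false

lemma ind_insert {V : Type*} {r : ℕ} (χ : Sym2 V → Fin r) (D : Finset (Fin r)) (d : Fin r)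
    (hd : d ∉ D) (e : Sym2 V) : ind χ (insert d D) e = ind χ D e + ind χ {d} e := by
  unfold ind
  by_cases h1 : χ e = d
  · have : χ e ∉ D := h1 ▸ hd
    simp [h1, hd]
  · simp [h1]

lemma swing_insert {V : Type*} {r : ℕ} (g : Gad V) (χ : Sym2 V → Fin r) (D : Finset (Fin r))
    (d : Fin r) (hd : d ∉ D) : g.swing χ (insert d D) = g.swing χ D + g.swing χ {d} := by
  simp only [Gad.swing, Gad.gain, ind_insert χ D d hd]
  ring

lemma sum_swing {V : Type*} {r : ℕ} (g : Gad V) (χ : Sym2 V → Fin r)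
    (hg : ∃ d, g.gain (ind χ {d}) true ≠ g.gain (ind χ {d}) false) :
    (2 : ℤ) ^ r ≤ 2 * ∑ D : Finset (Fin r), |g.swing χ D| := by
  obtain ⟨d, hd⟩ := hg
  have hd' : g.swing χ {d} ≠ 0 := sub_ne_zero.2 hd
  have hsplit : ∑ D : Finset (Fin r), |g.swing χ D| =
      ∑ D : Finset (Fin r), |g.swing χ (symmDiff D {d})| := by
    have hinv : Function.Involutive (fun D : Finset (Fin r) => symmDiff D {d}) := by
      intro D; simp
    exact (Equiv.sum_comp hinv.toPerm (fun D => |g.swing χ D|)).symm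
  have hpt : ∀ D : Finset (Fin r), 1 ≤ |g.swing χ D| + |g.swing χ (symmDiff D {d})| := by
    intro D
    by_cases hD : d ∈ D
    · have e1 : symmDiff D {d} = D.erase d := by
        ext a; simp [Finset.mem_symmDiff]; grind
      have e2 := swing_insert g χ (D.erase d) d (by simp)
      rw [Finset.insert_erase hD] at e2
      rw [e1]
      grind
    · have e1 : symmDiff D {d} = insert d D := by
        ext a; simp [Finset.mem_symmDiff]; grind
      have e2 := swing_insert g χ D d hD
      rw [e1]
      grind
  calc (2 : ℤ) ^ r = ∑ D : Finset (Fin r), (1 : ℤ) := by simp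
    _ ≤ ∑ D : Finset (Fin r), (|g.swing χ D| + |g.swing χ (symmDiff D {d})|) :=
      Finset.sum_le_sum (fun D _ => hpt D)
    _ = _ := by rw [Finset.sum_add_distrib, ← hsplit]; ring

/-- There is a colour set with large total swing. -/
lemma exists_swing {V : Type*} {r : ℕ} (χ : Sym2 V → Fin r) (gs : List (Gad V)) (m : ℕ)
    (hm : gs.length = 2 * m)
    (hg : ∀ g ∈ gs, ∃ d, g.gain (ind χ {d}) true ≠ g.gain (ind χ {d}) false) :
    ∃ D : Finset (Fin r), (m : ℤ) ≤ (gs.map (fun g => |g.swing χ D|)).sum := by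
  have h1 : ∀ gs : List (Gad V),
      (∀ g ∈ gs, ∃ d, g.gain (ind χ {d}) true ≠ g.gain (ind χ {d}) false) →
      (gs.length : ℤ) * 2 ^ r ≤ 2 * ∑ D : Finset (Fin r), (gs.map (fun g => |g.swing χ D|)).sum := by
    intro gs
    induction gs with
    | nil => intro _; simp
    | cons g gs ih =>
      intro H
      have i1 := ih (fun g' hg' => H g' (by simp [hg']))
      have i2 := sum_swing g χ (H g (by simp))
      simp only [List.map_cons, List.sum_cons, Finset.sum_add_distrib, List.length_cons]
      push_cast
      linarith
  have h2 := h1 gs hg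
  rw [hm] at h2
  have h3 : ∑ D : Finset (Fin r), (m : ℤ) ≤
      ∑ D : Finset (Fin r), (gs.map (fun g => |g.swing χ D|)).sum := by
    simp only [Finset.sum_const, Finset.card_univ, Fintype.card_finset, Fintype.card_fin,
      nsmul_eq_mul]
    push_cast at h2 ⊢
    linarith
  obtain ⟨D, _, hD⟩ := Finset.exists_le_of_sum_le (Finset.univ_nonempty) h3
  exact ⟨D, hD⟩

/-- A tour on `S` (in the complete graph) through the gadget edges. -/
lemma mem_pe_flat {V : Type*} (rest : List V) : ∀ (gs : List (Gad V)), ∀ g ∈ gs,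
    s(g.x, g.y) ∈ pe (gs.flatMap (fun g => [g.x, g.y, g.z, g.w]) ++ rest) ∧
    s(g.z, g.w) ∈ pe (gs.flatMap (fun g => [g.x, g.y, g.z, g.w]) ++ rest) := by
  have step : ∀ (g : Gad V) (L : List V), s(g.x, g.y) ∈ pe ([g.x, g.y, g.z, g.w] ++ L) ∧
      s(g.z, g.w) ∈ pe ([g.x, g.y, g.z, g.w] ++ L) ∧
      ∀ e ∈ pe L, e ∈ pe ([g.x, g.y, g.z, g.w] ++ L) := by
    intro g L
    refine ⟨by simp [pe], by simp [pe], ?_⟩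
    intro e he
    cases L with
    | nil => simp [pe] at he
    | cons a L => simp [pe, he]
  intro gs
  induction gs with
  | nil => simp
  | cons g gs ih =>
    intro g' hg'
    rw [List.flatMap_cons, List.append_assoc]
    obtain ⟨s1, s2, s3⟩ := step g (gs.flatMap (fun g => [g.x, g.y, g.z, g.w]) ++ rest)
    rcases List.mem_cons.1 hg' with h | h
    · subst h; exact ⟨s1, s2⟩
    · exact ⟨s3 _ (ih g' h).1, s3 _ (ih g' h).2⟩

lemma nodup_parts {V : Type*} : ∀ (gs : List (Gad V)), (gs.flatMap Gad.verts).Nodup →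
    (gs.map Gad.u).Nodup ∧ (gs.flatMap (fun g => [g.x, g.y, g.z, g.w])).Nodup ∧
    (∀ v ∈ gs.map Gad.u, v ∉ gs.flatMap (fun g => [g.x, g.y, g.z, g.w])) := by
  intro gs h
  have hperm : (gs.flatMap Gad.verts).Perm
      (gs.map Gad.u ++ gs.flatMap (fun g => [g.x, g.y, g.z, g.w])) := by
    clear h
    induction gs with
    | nil => simp
    | cons g gs ih =>
      rw [← Multiset.coe_eq_coe] at ih ⊢
      simp only [List.flatMap_cons, List.map_cons, List.cons_append, ← Multiset.coe_add,
        ← Multiset.cons_coe, ih, Gad.verts, ← Multiset.singleton_add, Multiset.coe_nil]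
      abel
  have h2 := hperm.nodup_iff.1 h
  rw [List.nodup_append] at h2
  exact ⟨h2.1, h2.2.1, fun v hv hv' => h2.2.2 v hv v hv' rfl⟩

/-- Existence of the base tour. -/
lemma base_tour {n m : ℕ} (G : SimpleGraph (Fin n)) (gs : List (Gad (Fin n)))
    (hlen : gs.length = 2 * m) (hnd : (gs.flatMap Gad.verts).Nodup) (hin : ∀ g ∈ gs, g.InG G)
    (hn : 2 * m < n)
    (hdeg : ∀ x, n + 6 * m ≤ 2 * (Finset.univ.filter (G.Adj x)).card) :
    ∃ (l : List (Fin n)) (h : l ≠ []), l.Nodup ∧ l.toFinset = (gs.map Gad.u).toFinsetᶜ ∧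
      (∀ e ∈ ce l h, e ∈ G.edgeSet) ∧
      ∀ g ∈ gs, g.u ∉ l ∧ s(g.x, g.y) ∈ ce l h ∧ s(g.z, g.w) ∈ ce l h := by
  obtain ⟨p1, p2, p3⟩ := nodup_parts gs hnd
  set U := (gs.map Gad.u).toFinset with hU
  set L := gs.flatMap (fun g => [g.x, g.y, g.z, g.w]) with hL
  set M : Finset (Sym2 (Fin n)) := (gs.map (fun g => s(g.x, g.y))).toFinset ∪
    (gs.map (fun g => s(g.z, g.w))).toFinset with hMdef
  have hUc : U.card = 2 * m := by
    rw [hU, List.toFinset_card_of_nodup p1, List.length_map, hlen]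
  have hUcc : Uᶜ.card = n - 2 * m := by rw [Finset.card_compl, hUc, Fintype.card_fin]
  have hMc : M.card ≤ 4 * m := by
    have q1 := Finset.card_union_le (gs.map (fun g => s(g.x, g.y))).toFinset
      (gs.map (fun g => s(g.z, g.w))).toFinset
    have q2 := List.toFinset_card_le (gs.map (fun g => s(g.x, g.y)))
    have q3 := List.toFinset_card_le (gs.map (fun g => s(g.z, g.w)))
    rw [List.length_map] at q2 q3
    rw [← hMdef] at q1
    omega
  have hMmem : ∀ e, e ∈ M ↔ ∃ g ∈ gs, e = s(g.x, g.y) ∨ e = s(g.z, g.w) := by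
    intro e
    simp only [hMdef, Finset.mem_union, List.mem_toFinset, List.mem_map]
    grind
  set rest := (Uᶜ \ L.toFinset).toList with hrest
  have hfin : (L ++ rest).toFinset = Uᶜ := by
    have hsub : L.toFinset ⊆ Uᶜ := by
      intro v hv
      rw [Finset.mem_compl]
      intro hv'
      exact p3 v (by simpa [hU] using hv') (by simpa using hv)
    rw [List.toFinset_append, hrest, Finset.toList_toFinset]
    exact Finset.union_sdiff_of_subset hsub
  have hnodup : (L ++ rest).Nodup := by
    rw [List.nodup_append]
    refine ⟨p2, Finset.nodup_toList _, ?_⟩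
    intro a ha b hb hab
    subst hab
    rw [hrest, Finset.mem_toList, Finset.mem_sdiff, List.mem_toFinset] at hb
    exact hb.2 ha
  have hne : L ++ rest ≠ [] := by
    intro h0
    rw [h0] at hfin
    have : Uᶜ.card = 0 := by rw [← hfin]; simp
    omega
  obtain ⟨l, h, h1, h2, h3, h4⟩ := posa G Uᶜ M (by
      intro x _
      have q1 : (Finset.univ.filter (G.Adj x)) ⊆ (Uᶜ.filter (G.Adj x)) ∪ U := by
        intro v hv
        by_cases hvU : v ∈ U
        · simp [hvU]
        · simp at hv; simp [hvU, hv]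
      have q2 := Finset.card_le_card q1
      have q3 := Finset.card_union_le (Uᶜ.filter (G.Adj x)) U
      have q4 := hdeg x
      omega) (by
      intro e he
      obtain ⟨g, hg, he | he⟩ := (hMmem e).1 he
      · rw [he]; exact (hin g hg).2.2.1
      · rw [he]; exact (hin g hg).2.2.2.2.2) _ (L ++ rest) hne hnodup hfin (by
      intro e he
      obtain ⟨g, hg, hh⟩ := (hMmem e).1 he
      have := mem_pe_flat rest gs g hg
      unfold ce
      rw [Multiset.mem_add]
      left
      rcases hh with hh | hh
      · rw [hh]; exact this.1
      · rw [hh]; exact this.2) rfl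
  refine ⟨l, h, h1, h2, h4, ?_⟩
  intro g hg
  refine ⟨?_, h3 _ ((hMmem _).2 ⟨g, hg, Or.inl rfl⟩), h3 _ ((hMmem _).2 ⟨g, hg, Or.inr rfl⟩)⟩
  intro hm
  rw [← List.mem_toFinset, h2, Finset.mem_compl] at hm
  exact hm (by rw [hU, List.mem_toFinset]; exact List.mem_map.2 ⟨g, hg, rfl⟩)

/-- Number of edges of a tour of a given colour. -/
lemma sum_ind {V : Type*} {r : ℕ} (χ : Sym2 V → Fin r) (D : Finset (Fin r)) (L : List (Sym2 V)) :
    (L.map (ind χ D)).sum = ∑ d ∈ D, ((L.filter (fun e => decide (χ e = d))).length : ℤ) := by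
  induction L with
  | nil => simp
  | cons e L ih =>
    rw [List.map_cons, List.sum_cons, ih]
    have : ∀ d, (((e :: L).filter (fun e => decide (χ e = d))).length : ℤ) =
        (if χ e = d then 1 else 0) + ((L.filter (fun e => decide (χ e = d))).length : ℤ) := by
      intro d
      by_cases h : χ e = d
      · simp [h]; ring
      · simp [h]
    simp only [this, Finset.sum_add_distrib, Finset.sum_ite_eq, ind]

lemma core {n r b : ℕ} (hr : 2 ≤ r) (hb : 1 ≤ b) (hbn : 1024 * (r * r * b) ≤ n)
    (G : SimpleGraph (Fin n)) (χ : Sym2 (Fin n) → Fin r)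
    (hdeg : ∀ x, (r + 1) * n ≤ 2 * r * (Finset.univ.filter (G.Adj x)).card)
    (X : Finset (Fin n)) (hX : X.card = 2 * (r * b))
    (H : ∀ v ∈ X, ∀ F : Finset (Fin n), F.card ≤ 12 * (r * b) → v ∉ F →
      ∃ g : Gad (Fin n), g.Good G χ ∧ ∀ w ∈ g.verts, w ∉ F) :
    ∃ (u : Fin n) (H : G.Walk u u), H.IsHamiltonianCycle ∧
      ∃ c : Fin r, (n : ℝ) / r + (b : ℝ) ≤
        ((H.edges.filter fun e => decide (χ e = c)).length : ℝ) := by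
  obtain ⟨gs, g1, g2, g3, g4⟩ := greedy G χ X hX H X (le_refl _)
  rw [hX] at g1
  have hrb : r * b ≤ r * r * b := by nlinarith
  have hrb1 : 1 ≤ r * b := by nlinarith
  obtain ⟨D, hD⟩ := exists_swing χ gs (r * b) g1 (fun g hg => (g3 g hg).2.2)
  have hin : ∀ g ∈ gs, g.InG G := fun g hg => (g3 g hg).1
  obtain ⟨l, h, l1, l2, l3, l4⟩ := base_tour G gs g1 g2 hin (by omega) (by
    intro x
    have := hdeg x
    by_contra hlt
    push Not at hlt
    nlinarith)
  obtain ⟨la, ha, a1, a2, a3, a4⟩ := insert_all G (fun g => decide (0 ≤ g.swing χ D))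
    gs g2 hin l h l1 l3 l4
  obtain ⟨lb, hb', b1, b2, b3, b4⟩ := insert_all G (fun g => !decide (0 ≤ g.swing χ D))
    gs g2 hin l h l1 l3 l4
  have huniv : l.toFinset ∪ (gs.map Gad.u).toFinset = Finset.univ := by
    rw [l2, Finset.union_comm]; exact Finset.union_compl _
  rw [huniv] at a2 b2
  obtain ⟨ua, Ha, hHa, hea⟩ := ham_of_list G la ha a1 a2 (by omega) a3
  obtain ⟨ub, Hb, hHb, heb⟩ := ham_of_list G lb hb' b1 b2 (by omega) b3
  have hdiff : ((ce la ha).map (ind χ D)).sum - ((ce lb hb').map (ind χ D)).sum =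
      (gs.map (fun g => |g.swing χ D|)).sum := by
    rw [a4, b4]
    clear a4 b4 g1 g2 g3 g4 hD hin l4 hea heb huniv l2
    induction gs with
    | nil => simp
    | cons g gs ih =>
      simp only [List.map_cons, List.sum_cons]
      rw [← ih]
      by_cases h0 : 0 ≤ g.swing χ D
      · simp only [h0, decide_true, Bool.not_true, abs_of_nonneg h0]
        simp only [Gad.swing]
        ring
      · simp only [h0, decide_false, Bool.not_false, abs_of_neg (not_le.1 h0)]
        simp only [Gad.swing]
        ring
  rw [← hea, ← heb, Multiset.map_coe, Multiset.map_coe, Multiset.sum_coe, Multiset.sum_coe,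
    sum_ind, sum_ind] at hdiff
  have htot : ∑ d : Fin r, ((Hb.edges.filter (fun e => decide (χ e = d))).length : ℤ) = n := by
    rw [← sum_ind]
    have : Hb.edges.length = n := by
      rw [SimpleGraph.Walk.length_edges, hHb.length_eq, Fintype.card_fin]
    have h1 : ∀ L : List (Sym2 (Fin n)), (L.map (ind χ Finset.univ)).sum = (L.length : ℤ) := by
      intro L
      induction L with
      | nil => simp
      | cons e L ih =>
        rw [List.map_cons, List.sum_cons, ih, List.length_cons, ind, if_pos (Finset.mem_univ _)]
        push_cast
        ring
    rw [h1, this]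
  have hsum : ((n : ℤ) + r * b) ≤ ∑ d : Fin r, (if d ∈ D then
      ((Ha.edges.filter (fun e => decide (χ e = d))).length : ℤ) else
      ((Hb.edges.filter (fun e => decide (χ e = d))).length : ℤ)) := by
    rw [Finset.sum_ite, Finset.filter_mem_eq_inter, Finset.univ_inter]
    have hsp := Finset.sum_filter_add_sum_filter_not Finset.univ (fun d => d ∈ D)
      (fun d => ((Hb.edges.filter (fun e => decide (χ e = d))).length : ℤ))
    rw [Finset.filter_mem_eq_inter, Finset.univ_inter, htot] at hsp
    push_cast at hD
    linarith
  have hr0 : (r : ℝ) ≠ 0 := by positivity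
  have hsumR : ∑ d : Fin r, ((n : ℝ) / r + b) ≤ ∑ d : Fin r, (if d ∈ D then
      ((Ha.edges.filter (fun e => decide (χ e = d))).length : ℝ) else
      ((Hb.edges.filter (fun e => decide (χ e = d))).length : ℝ)) := by
    have : ∑ d : Fin r, ((n : ℝ) / r + b) = n + r * b := by
      simp only [Finset.sum_const, Finset.card_univ, Fintype.card_fin, nsmul_eq_mul]
      field_simp
    rw [this]
    exact_mod_cast hsum
  have : Nonempty (Fin r) := ⟨⟨0, by omega⟩⟩
  obtain ⟨d, _, hd⟩ := Finset.exists_le_of_sum_le (Finset.univ_nonempty) hsumR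
  by_cases hdD : d ∈ D
  · rw [if_pos hdD] at hd
    exact ⟨ua, Ha, hHa, d, hd⟩
  · rw [if_neg hdD] at hd
    exact ⟨ub, Hb, hHb, d, hd⟩

/-- Let `r ≥ 2`. For all sufficiently large `n`, all
`1 ≤ b ≤ 2⁻¹⁰ r⁻² n`, with `t = 2⁵ r b` and `s = 8 r b`: let `G` be a graph on `n`
vertices with minimum degree at least `(r+1)n/(2r)` and `χ` an `r`-colouring such that
for each colour `c` and vertex `v` there is a matching in `G[N(v)]` with at least
`2⁹ r b` edges none of colour `c`. If `|X_c| ≥ s/4` or `|Y_c| ≥ s/4` for some colour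
`c`, then `G` has a Hamilton cycle with colour bias at least `b`. -/
theorem stmt_14 (r : ℕ) (hr : 2 ≤ r) :
    ∃ N : ℕ, ∀ n ≥ N, ∀ b : ℕ, 1 ≤ b → (b : ℝ) ≤ 2⁻¹ ^ 10 * ((r : ℝ))⁻¹ ^ 2 * n →
      ∀ G : SimpleGraph (Fin n),
        (∀ u : Fin n, ((r : ℝ) + 1) / (2 * r) * n ≤ ((G.neighborSet u).ncard : ℝ)) →
        ∀ χ : Sym2 (Fin n) → Fin r,
          (∀ (c : Fin r) (v : Fin n), ∃ M : Finset (Sym2 (Fin n)), MatchingIn M G ∧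
            (∀ e ∈ M, ∀ w ∈ e, G.Adj v w) ∧ (∀ e ∈ M, χ e ≠ c) ∧ 2 ^ 9 * r * b ≤ M.card) →
          (∃ c : Fin r,
            ((8 * r * b : ℕ) : ℝ) / 4 ≤ ((Xset G χ c (2 ^ 5 * r * b)).ncard : ℝ) ∨
            ((8 * r * b : ℕ) : ℝ) / 4 ≤ ((Yset G χ c (2 ^ 5 * r * b)).ncard : ℝ)) →
          ∃ (u : Fin n) (H : G.Walk u u), H.IsHamiltonianCycle ∧
            ∃ c : Fin r,
              (n : ℝ) / r + (b : ℝ) ≤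
                ((H.edges.filter fun e => decide (χ e = c)).length : ℝ) := by
  refine ⟨0, ?_⟩
  intro n _ b hb hbn G hdeg χ hM hc
  have hr0 : (0 : ℝ) < r := by positivity
  have hbn' : 1024 * (r * r * b) ≤ n := by
    have h1 : (1024 : ℝ) * (r * r * b) ≤ n := by
      have h2 : (1024 : ℝ) * (r * r * b) ≤ 1024 * (r * r * (2⁻¹ ^ 10 * ((r : ℝ))⁻¹ ^ 2 * n)) := by
        gcongr
      refine h2.trans (le_of_eq ?_)
      field_simp
      norm_num
    exact_mod_cast h1
  have hdeg' : ∀ x, (r + 1) * n ≤ 2 * r * (Finset.univ.filter (G.Adj x)).card := by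
    intro x
    have h1 := hdeg x
    have h2 : (G.neighborSet x).ncard = (Finset.univ.filter (G.Adj x)).card := by
      rw [← Set.ncard_coe_finset]
      congr 1
      ext v
      simp
    rw [h2] at h1
    have h3 : ((r : ℝ) + 1) * n ≤ 2 * r * ((Finset.univ.filter (G.Adj x)).card : ℝ) := by
      calc ((r : ℝ) + 1) * n = 2 * r * (((r : ℝ) + 1) / (2 * r) * n) := by field_simp
        _ ≤ _ := by gcongr
    exact_mod_cast h3
  have hrb1 : 1 ≤ r * b := by nlinarith
  have getX : ∀ S : Set (Fin n), ((8 * r * b : ℕ) : ℝ) / 4 ≤ (S.ncard : ℝ) →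
      ∃ X : Finset (Fin n), (∀ v ∈ X, v ∈ S) ∧ X.card = 2 * (r * b) := by
    intro S hS
    have h1 : 2 * (r * b) ≤ S.toFinset.card := by
      rw [← Set.ncard_eq_toFinset_card']
      have : (2 : ℝ) * (r * b) ≤ (S.ncard : ℝ) := by
        push_cast at hS
        linarith
      exact_mod_cast this
    obtain ⟨X, hX1, hX2⟩ := Finset.exists_subset_card_eq h1
    exact ⟨X, fun v hv => by simpa using hX1 hv, hX2⟩
  obtain ⟨c, hc | hc⟩ := hc
  · obtain ⟨X, hX1, hX2⟩ := getX _ hc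
    exact core hr hb hbn' G χ hdeg' X hX2 (fun v hv F hF hvF =>
      gad_X G χ b hM hrb1 c v (hX1 v hv) F hF hvF)
  · obtain ⟨X, hX1, hX2⟩ := getX _ hc
    exact core hr hb hbn' G χ hdeg' X hX2 (fun v hv F hF hvF =>
      gad_Y G χ b hM hrb1 c v (hX1 v hv) F hF hvF)
end
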